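/- If G is a simple planar graph on n vertices in which every vertex has even degree, then the edge set E(G) can be partitioned into at most ⌊(n−1)/2⌋ cycles. -/

import Mathlib

/-!
The proof is an induction on the number `s` of non-isolated vertices, with the bound
`⌊(s - 1) / 2⌋`.

*The inductive step* (`reduce`).  Suppose removing a cycle `F` makes it possible to suppress two
vertices `u` and `v`: each becomes isolated, or keeps exactly two neighbours, which are nonadjacent,
and the two suppressions do not add the same edge.  The resulting graph is even, planar and has two
vertices fewer, so it has a decomposition with one cycle fewer than allowed.  Subdividing the added
edges again and adding `F` decomposes `G`.  Cut vertices are handled by splitting the graph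
(`dec_of_not_conn2`), so `G` may be assumed 2-connected.

*Finding `u` and `v`* (`exists_low`).  The bound `|E| ≤ 3 * n - 6`, proved for graphs without `K₅`
minor by contracting edges in few triangles, gives at least three vertices of degree at most `4`.
Either two of them are nonadjacent, or the low vertices are mutually adjacent; by the edge bound
the latter leaves only a triangle of vertices of degree `2`, whose removal is an instance of
`reduce`.

*Finding the cycle.*  Let `u, v` be nonadjacent of degree at most `4`.  By Whitney's argument there
are two internally disjoint paths `P, Q` from `u` to `v` (a link), whose union is a candidate for
`F`.  The only obstacle at `u` is an edge between the two remaining neighbours `c, d` of `u`.  If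
`cd` is an edge of the link there is no problem, and if some edge joins `c` or `d` to a neighbour of
`u` on the link, while `c, d` are off the link, then rerouting `u, x, …` to `u, d, c, x, …` leaves
the remaining neighbours `x, c` joined by an edge of the link.  The end `u` is called bad if
`c, d` are adjacent and no such edge exists.  A link that is bad at neither end (an NB link) exists
by `exists_nb`; one of minimal total length has at each end either nonadjacent remaining neighbours
or a configuration that can be rerouted (`IsMinNB.strong_or_alpha`).  The exceptions are the links
where the two ends interfere: if both ends have the same remaining neighbours, or share one that is
to be rerouted, then by minimality the paths have length `2`, and either `u` and `v` have the same
four neighbours, or a different choice of link works, or there is a `K₃,₃`.  The case of equal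
neighbourhoods is treated directly (`Four.dec`).
-/

open SimpleGraph

attribute [local instance] Classical.propDecidable

/-- A cycle in a graph: a connected, 2-regular subgraph. -/
def IsCycleSubgraph {V : Type*} {G : SimpleGraph V} (C : G.Subgraph) : Prop :=
  C.coe.Connected ∧ ∀ v ∈ C.verts, (C.neighborSet v).ncard = 2

/-- Graph minor relation (via branch sets). -/
def HasGraphMinor {V : Type*} {W : Type*} (G : SimpleGraph V) (H : SimpleGraph W) : Prop :=
  ∃ f : W → Set V,
    (∀ w, (f w).Nonempty) ∧
    (∀ w, (G.induce (f w)).Connected) ∧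
    (Pairwise fun w₁ w₂ => Disjoint (f w₁) (f w₂)) ∧
    ∀ ⦃w₁ w₂⦄, H.Adj w₁ w₂ → ∃ v₁ ∈ f w₁, ∃ v₂ ∈ f w₂, G.Adj v₁ v₂

/-- Planarity, via Wagner's theorem: no `K₅` minor and no `K_{3,3}` minor. -/
def IsPlanar {V : Type*} (G : SimpleGraph V) : Prop :=
  ¬ HasGraphMinor G (completeGraph (Fin 5)) ∧
  ¬ HasGraphMinor G (completeBipartiteGraph (Fin 3) (Fin 3))

/-! ### Minors and contractions -/

/-- The contraction of `y` into `x`, kept on the vertex type `V`: `y` becomes isolated and `x`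
inherits its neighbours.  This is a minor of `G` when `x` and `y` are adjacent. -/
def contr {V : Type*} (G : SimpleGraph V) (x y : V) : SimpleGraph V where
  Adj a b := a ≠ b ∧ a ≠ y ∧ b ≠ y ∧
    (G.Adj a b ∨ (a = x ∧ G.Adj y b) ∨ (b = x ∧ G.Adj y a))
  symm := ⟨by
    rintro a b ⟨h1, h2, h3, h4⟩
    refine ⟨h1.symm, h3, h2, ?_⟩
    rcases h4 with h | h | h
    · exact Or.inl h.symm
    · exact Or.inr (Or.inr h)
    · exact Or.inr (Or.inl h)⟩
  loopless := ⟨fun a h => h.1 rfl⟩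

lemma HasGraphMinor.mono {V W : Type*} {G H : SimpleGraph V} {K : SimpleGraph W} (hle : H ≤ G)
    (h : HasGraphMinor H K) : HasGraphMinor G K := by
  obtain ⟨f, h1, h2, h3, h4⟩ := h
  refine ⟨f, h1, fun w => (h2 w).mono ?_, h3, fun w₁ w₂ hw => ?_⟩
  · intro a b hab
    exact hle hab
  · obtain ⟨a, ha, b, hb, hab⟩ := h4 hw
    exact ⟨a, ha, b, hb, hle hab⟩

/-- A minor without isolated vertices of a contraction is a minor of the graph: `y` joins the
branch set that contains `x`. -/
lemma HasGraphMinor.of_contr {V W : Type*} {G : SimpleGraph V} {K : SimpleGraph W} {x y : V}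
    (hK : ∀ w, ∃ w', K.Adj w w') (hxy : G.Adj x y)
    (h : HasGraphMinor (contr G x y) K) : HasGraphMinor G K := by
  obtain ⟨f, h1, h2, h3, h4⟩ := h
  have hdisj : ∀ {w₁ w₂ z}, z ∈ f w₁ → z ∈ f w₂ → w₁ = w₂ := by
    intro w₁ w₂ z hz1 hz2
    by_contra hne
    exact Set.disjoint_left.mp (h3 hne) hz1 hz2
  -- `y` is isolated in the contraction, so no branch set contains it
  have hy : ∀ w, y ∉ f w := by
    intro w hyw
    obtain ⟨w', hw'⟩ := hK w
    obtain ⟨a, ha, b, hb, hab⟩ := h4 hw'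
    have hay : a ≠ y := hab.2.1
    obtain ⟨p⟩ := (h2 w).preconnected ⟨y, hyw⟩ ⟨a, ha⟩
    cases p with
    | nil => exact hay rfl
    | cons h' _ => exact h'.2.1 rfl
  let g : W → Set V := fun w => f w ∪ {z | z = y ∧ x ∈ f w}
  have hfg : ∀ w, f w ⊆ g w := fun w => Set.subset_union_left
  have hyg : ∀ {w}, x ∈ f w → y ∈ g w := fun {w} hx => Or.inr ⟨rfl, hx⟩
  refine ⟨g, fun w => (h1 w).mono (hfg w), fun w => ?_, ?_, ?_⟩
  · have key : ∀ a b : f w, ((contr G x y).induce (f w)).Reachable a b →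
        (G.induce (g w)).Reachable ⟨a, hfg w a.2⟩ ⟨b, hfg w b.2⟩ := by
      rintro a b ⟨p⟩
      induction p with
      | nil => exact Reachable.refl _
      | @cons a b c hab p ih =>
        refine Reachable.trans ?_ ih
        obtain ⟨hne, hay, hby, hadj⟩ := hab
        change G.Adj a b ∨ ((a : V) = x ∧ G.Adj y b) ∨ ((b : V) = x ∧ G.Adj y a) at hadj
        rcases hadj with h | ⟨ha, h⟩ | ⟨hb, h⟩
        · exact SimpleGraph.Adj.reachable (show (G.induce (g w)).Adj _ _ from h)
        · have hyw : y ∈ g w := hyg (ha ▸ a.2)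
          have e1 : (G.induce (g w)).Adj ⟨a, hfg w a.2⟩ ⟨y, hyw⟩ := by
            change G.Adj a y
            rw [ha]; exact hxy
          have e2 : (G.induce (g w)).Adj ⟨y, hyw⟩ ⟨b, hfg w b.2⟩ := h
          exact e1.reachable.trans e2.reachable
        · have hyw : y ∈ g w := hyg (hb ▸ b.2)
          have e1 : (G.induce (g w)).Adj ⟨b, hfg w b.2⟩ ⟨y, hyw⟩ := by
            change G.Adj b y
            rw [hb]; exact hxy
          have e2 : (G.induce (g w)).Adj ⟨y, hyw⟩ ⟨a, hfg w a.2⟩ := h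
          exact (e1.reachable.trans e2.reachable).symm
    obtain ⟨z, hz⟩ := h1 w
    have : ∀ a : g w, (G.induce (g w)).Reachable ⟨z, hfg w hz⟩ a := by
      rintro ⟨a, ha⟩
      rcases ha with ha | ⟨ha, hx⟩
      · exact key ⟨z, hz⟩ ⟨a, ha⟩ ((h2 w).preconnected _ _)
      · have e1 : (G.induce (g w)).Adj ⟨x, hfg w hx⟩ ⟨a, Or.inr ⟨ha, hx⟩⟩ := by
          change G.Adj x a
          rw [ha]; exact hxy
        exact (key ⟨z, hz⟩ ⟨x, hx⟩ ((h2 w).preconnected _ _)).trans e1.reachable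
    have hne : Nonempty (g w) := ⟨⟨z, hfg w hz⟩⟩
    exact ⟨fun a b => (this a).symm.trans (this b)⟩
  · intro w₁ w₂ hne
    rw [Set.disjoint_left]
    rintro z (hz | ⟨hz, hx⟩) (hz' | ⟨hz', hx'⟩)
    · exact hne (hdisj hz hz')
    · exact hy _ (hz' ▸ hz)
    · exact hy _ (hz ▸ hz')
    · exact hne (hdisj hx hx')
  · intro w₁ w₂ hw
    obtain ⟨a, ha, b, hb, -, -, -, hadj⟩ := h4 hw
    rcases hadj with h | ⟨hax, h⟩ | ⟨hbx, h⟩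
    · exact ⟨a, hfg _ ha, b, hfg _ hb, h⟩
    · exact ⟨y, hyg (hax ▸ ha), b, hfg _ hb, h⟩
    · exact ⟨a, hfg _ ha, y, hyg (hbx ▸ hb), h.symm⟩

lemma IsPlanar.mono {V : Type*} {G H : SimpleGraph V} (hle : H ≤ G) (h : IsPlanar G) :
    IsPlanar H :=
  ⟨fun h' => h.1 (h'.mono hle), fun h' => h.2 (h'.mono hle)⟩

lemma noIsolated_K5 (w : Fin 5) : ∃ w', (completeGraph (Fin 5)).Adj w w' := by
  refine ⟨w + 1, ?_⟩
  change w ≠ w + 1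
  revert w
  decide

lemma noIsolated_K33 (w : Fin 3 ⊕ Fin 3) :
    ∃ w', (completeBipartiteGraph (Fin 3) (Fin 3)).Adj w w' := by
  rcases w with w | w
  · exact ⟨Sum.inr 0, by simp⟩
  · exact ⟨Sum.inl 0, by simp⟩

lemma IsPlanar.contr {V : Type*} {G : SimpleGraph V} {x y : V} (hxy : G.Adj x y)
    (h : IsPlanar G) : IsPlanar (contr G x y) :=
  ⟨fun h' => h.1 (h'.of_contr noIsolated_K5 hxy), fun h' => h.2 (h'.of_contr noIsolated_K33 hxy)⟩

lemma induce_singleton_connected {V : Type*} (G : SimpleGraph V) (a : V) :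
    (G.induce ({a} : Set V)).Connected := by
  have : Nonempty ({a} : Set V) := ⟨⟨a, rfl⟩⟩
  refine ⟨fun x y => ?_⟩
  have : x = y := Subsingleton.elim _ _
  rw [this]

lemma IsPlanar.no_K33 {V : Type*} {G : SimpleGraph V} (h : IsPlanar G) (l r : Fin 3 → V)
    (hl : Function.Injective l) (hr : Function.Injective r)
    (hadj : ∀ i j, G.Adj (l i) (r j)) : False := by
  apply h.2
  refine ⟨fun w => {Sum.elim l r w}, fun w => Set.singleton_nonempty _,
    fun w => induce_singleton_connected G _, ?_, ?_⟩
  · intro w₁ w₂ hne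
    simp only [Set.disjoint_singleton]
    rcases w₁ with i | i <;> rcases w₂ with j | j <;> simp only [Sum.elim_inl, Sum.elim_inr]
    · exact fun h => hne (by rw [hl h])
    · exact (hadj i j).ne
    · exact (hadj j i).ne'
    · exact fun h => hne (by rw [hr h])
  · rintro (i | i) (j | j) hw
    · simp at hw
    · exact ⟨_, rfl, _, rfl, hadj i j⟩
    · exact ⟨_, rfl, _, rfl, (hadj j i).symm⟩
    · simp at hw

lemma K5_minor_of_clique {V : Type*} {G : SimpleGraph V} (l : Fin 5 → V)
    (hadj : ∀ i j, i ≠ j → G.Adj (l i) (l j)) : HasGraphMinor G (completeGraph (Fin 5)) := by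
  refine ⟨fun w => {l w}, fun w => Set.singleton_nonempty _,
    fun w => induce_singleton_connected G _, ?_, ?_⟩
  · intro w₁ w₂ hne
    simpa only [Set.disjoint_singleton] using (hadj _ _ hne).ne
  · intro i j hw
    exact ⟨_, rfl, _, rfl, hadj i j hw⟩

lemma K5_minor_of_set {V : Type*} {G : SimpleGraph V} (T : Set V) (hT : 5 ≤ T.ncard)
    (hadj : ∀ a ∈ T, ∀ b ∈ T, a ≠ b → G.Adj a b) : HasGraphMinor G (completeGraph (Fin 5)) := by
  have hfin : T.Finite := Set.finite_of_ncard_ne_zero (by omega)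
  have hc : 5 ≤ hfin.toFinset.card := by rwa [← Set.ncard_eq_toFinset_card T hfin]
  obtain ⟨U, hU, hU5⟩ := Finset.exists_subset_card_eq hc
  let e := U.equivFinOfCardEq hU5
  refine K5_minor_of_clique (fun i => (e.symm i : V)) fun i j hij => ?_
  have hm : ∀ i, (e.symm i : V) ∈ T := fun i => hfin.mem_toFinset.mp (hU (e.symm i).2)
  refine hadj _ (hm i) _ (hm j) fun h => hij ?_
  exact e.symm.injective (Subtype.ext h)

/-! ### The edge bound -/

lemma edgeSet_ncard_le_of_le {V : Type*} [Finite V] {G H : SimpleGraph V} (h : H ≤ G) :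
    H.edgeSet.ncard ≤ G.edgeSet.ncard :=
  Set.ncard_le_ncard (edgeSet_mono h) (Set.toFinite _)

/-- Handshake lemma, summing over any finite set that contains the non-isolated vertices. -/
lemma sum_ncard_neighborSet {V : Type*} [Finite V] (G : SimpleGraph V) (W : Finset V)
    (hW : ∀ a b, G.Adj a b → a ∈ W) :
    ∑ v ∈ W, (G.neighborSet v).ncard = 2 * G.edgeSet.ncard := by
  have := Fintype.ofFinite V
  have h := G.sum_degrees_eq_twice_card_edges
  have h1 : ∀ v, G.degree v = (G.neighborSet v).ncard := fun v => by
    rw [← card_neighborSet_eq_degree, Set.ncard_eq_toFinset_card', Set.toFinset_card]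
  have h2 : G.edgeFinset.card = G.edgeSet.ncard := by
    rw [Set.ncard_eq_toFinset_card', edgeFinset]
  rw [← h2, ← h]
  simp only [h1]
  refine Finset.sum_subset (Finset.subset_univ _) fun v _ hv => ?_
  have : G.neighborSet v = ∅ := by
    ext b
    simp only [mem_neighborSet, Set.mem_empty_iff_false, iff_false]
    exact fun hb => hv (hW v b hb)
  rw [this, Set.ncard_empty]

/-- `G` with all edges at `v` removed. -/
def del {V : Type*} (G : SimpleGraph V) (v : V) : SimpleGraph V where
  Adj a b := G.Adj a b ∧ a ≠ v ∧ b ≠ v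
  symm := ⟨fun _ _ h => ⟨h.1.symm, h.2.2, h.2.1⟩⟩
  loopless := ⟨fun _ h => h.1.ne rfl⟩

lemma edge_le_del {V : Type*} [Finite V] (G : SimpleGraph V) (v : V) :
    G.edgeSet.ncard ≤ (del G v).edgeSet.ncard + (G.neighborSet v).ncard := by
  have hsub : G.edgeSet ⊆ (del G v).edgeSet ∪ (fun b => s(v, b)) '' G.neighborSet v := by
    intro e
    induction e with | _ a b
    intro hab
    rw [mem_edgeSet] at hab
    by_cases ha : a = v
    · subst ha
      exact Or.inr ⟨b, hab, rfl⟩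
    · by_cases hb : b = v
      · subst hb
        exact Or.inr ⟨a, hab.symm, Sym2.eq_swap⟩
      · exact Or.inl (by rw [mem_edgeSet]; exact ⟨hab, ha, hb⟩)
  calc G.edgeSet.ncard ≤ _ := Set.ncard_le_ncard hsub (Set.toFinite _)
    _ ≤ _ := Set.ncard_union_le _ _
    _ ≤ _ := Nat.add_le_add_left (Set.ncard_image_le (Set.toFinite _)) _

/-- Contracting `xy` loses the edge `xy` and one edge for each triangle through `xy`. -/
lemma edge_le_contr {V : Type*} [Finite V] (G : SimpleGraph V) {x y : V} (hxy : G.Adj x y) :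
    G.edgeSet.ncard ≤
      (contr G x y).edgeSet.ncard + (G.neighborSet x ∩ G.neighborSet y).ncard + 1 := by
  have h1 := edge_le_del G y
  let M := G.neighborSet y \ ({x} ∪ (G.neighborSet x ∩ G.neighborSet y))
  have hM : (G.neighborSet y).ncard ≤
      M.ncard + ((G.neighborSet x ∩ G.neighborSet y).ncard + 1) := by
    have : G.neighborSet y ⊆ M ∪ ((G.neighborSet x ∩ G.neighborSet y) ∪ {x}) := by
      intro z hz
      by_cases h : z ∈ ({x} ∪ (G.neighborSet x ∩ G.neighborSet y) : Set V)
      · exact Or.inr h.symm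
      · exact Or.inl ⟨hz, h⟩
    calc (G.neighborSet y).ncard ≤ _ := Set.ncard_le_ncard this (Set.toFinite _)
      _ ≤ _ := Set.ncard_union_le _ _
      _ ≤ _ := Nat.add_le_add_left ((Set.ncard_union_le _ _).trans (by simp)) _
  have hinj : Function.Injective (fun b : V => s(x, b)) := by
    intro a b h
    simp only [Sym2.eq_iff] at h
    rcases h with h | h
    · exact h.2
    · exact h.2.trans h.1
  have hdisj : Disjoint (del G y).edgeSet ((fun b => s(x, b)) '' M) := by
    rw [Set.disjoint_left]
    rintro e he ⟨b, hb, rfl⟩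
    simp only [mem_edgeSet] at he
    exact hb.2 (Or.inr ⟨he.1, hb.1⟩)
  have hsub : (del G y).edgeSet ∪ ((fun b => s(x, b)) '' M) ⊆ (contr G x y).edgeSet := by
    rintro e (he | ⟨b, hb, rfl⟩)
    · revert he
      induction e with | _ a b
      intro he
      rw [mem_edgeSet] at he ⊢
      exact ⟨he.1.ne, he.2.1, he.2.2, Or.inl he.1⟩
    · rw [mem_edgeSet]
      exact ⟨fun h => hb.2 (Or.inl h.symm), hxy.ne, hb.1.ne', Or.inr (Or.inl ⟨rfl, hb.1⟩)⟩
  have h2 := Set.ncard_le_ncard hsub (Set.toFinite _)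
  rw [Set.ncard_union_eq hdisj (Set.toFinite _) (Set.toFinite _),
    Set.ncard_image_of_injective _ hinj] at h2
  omega

/-- A vertex of degree `4` or `5` all of whose edges lie in at least three triangles yields a
`K₅` minor: its neighbourhood is complete up to a matching. -/
lemma K5_minor_of_nbhd {V : Type*} [Finite V] (G : SimpleGraph V) (v : V)
    (h4 : 4 ≤ (G.neighborSet v).ncard) (h5 : (G.neighborSet v).ncard ≤ 5)
    (h3 : ∀ w, G.Adj v w → 3 ≤ (G.neighborSet v ∩ G.neighborSet w).ncard) :
    HasGraphMinor G (completeGraph (Fin 5)) := by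
  set S := G.neighborSet v with hS
  by_cases hall : ∀ a ∈ S, ∀ b ∈ S, a ≠ b → G.Adj a b
  · refine K5_minor_of_set (insert v S) ?_ ?_
    · rw [Set.ncard_insert_of_notMem (by simp [hS])]
      omega
    · rintro a (rfl | ha) b (rfl | hb) hab
      · exact absurd rfl hab
      · exact hb
      · exact ha.symm
      · exact hall a ha b hb hab
  push Not at hall
  obtain ⟨a, ha, b, hb, hab, hnab⟩ := hall
  -- each vertex of `S` misses at most one other vertex of `S`
  have hmiss : ∀ w ∈ S, ∀ p ∈ S, ∀ q ∈ S, p ≠ w → q ≠ w → p ≠ q →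
      ¬ G.Adj w p → G.Adj w q := by
    intro w hw p hp q hq hpw hqw hpq hnp
    by_contra hnq
    have hsub : S ∩ G.neighborSet w ⊆ S \ {w, p, q} := by
      rintro z ⟨hz, hwz⟩
      refine ⟨hz, ?_⟩
      rintro (rfl | rfl | rfl)
      · exact hwz.ne rfl
      · exact hnp hwz
      · exact hnq hwz
    have e1 := Set.ncard_le_ncard hsub (Set.toFinite _)
    have e2 : ({w, p, q} : Set V).ncard = 3 := Set.ncard_eq_three.mpr
      ⟨w, p, q, hpw.symm, hqw.symm, hpq, rfl⟩
    have e3 := Set.ncard_sdiff (s := ({w, p, q} : Set V)) (t := S) (by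
      rintro z (rfl | rfl | rfl) <;> assumption) (Set.toFinite _)
    have e4 := h3 w hw
    omega
  have e2 : ({a, b} : Set V).ncard = 2 := Set.ncard_pair hab
  have e3 := Set.ncard_sdiff (s := ({a, b} : Set V)) (t := S) (by
      rintro z (rfl | rfl) <;> assumption) (Set.toFinite _)
  have hge : 3 ≤ (S \ {a, b}).ncard := by
    have hsub : S ∩ G.neighborSet a ⊆ S \ {a, b} := by
      rintro z ⟨hz, hwz⟩
      refine ⟨hz, ?_⟩
      rintro (rfl | rfl)
      · exact hwz.ne rfl
      · exact hnab hwz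
    exact (h3 a ha).trans (Set.ncard_le_ncard hsub (Set.toFinite _))
  obtain ⟨c, d, e, hcd, hce, hde, hcde⟩ :=
    Set.ncard_eq_three.mp (show (S \ {a, b}).ncard = 3 by omega)
  have hc : c ∈ S \ {a, b} := by rw [hcde]; simp
  have hd : d ∈ S \ {a, b} := by rw [hcde]; simp
  have he : e ∈ S \ {a, b} := by rw [hcde]; simp
  have hnba : ¬ G.Adj b a := fun h => hnab h.symm
  have hA : ∀ z ∈ S \ {a, b}, G.Adj a z ∧ G.Adj b z ∧ z ≠ a ∧ z ≠ b := by
    intro z hz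
    have hza : z ≠ a := fun h => hz.2 (Or.inl h)
    have hzb : z ≠ b := fun h => hz.2 (Or.inr h)
    exact ⟨hmiss a ha b hb z hz.1 hab.symm hza hzb.symm hnab,
      hmiss b hb a ha z hz.1 hab hzb hza.symm hnba, hza, hzb⟩
  -- contracting `c` into `a` makes `v, a, b, d, e` a clique as soon as `d` and `e` are adjacent
  have main : ∀ c d e, c ∈ S \ {a, b} → d ∈ S \ {a, b} → e ∈ S \ {a, b} → c ≠ d → c ≠ e →
      G.Adj d e → HasGraphMinor G (completeGraph (Fin 5)) := by
    intro c d e hc hd he hcd hce hde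
    obtain ⟨hac, hbc, hca, hcb⟩ := hA c hc
    obtain ⟨had, hbd, hda, hdb⟩ := hA d hd
    obtain ⟨hae, hbe, hea, heb⟩ := hA e he
    have hvc : G.Adj v c := hc.1
    have hva : G.Adj v a := ha
    have hvb : G.Adj v b := hb
    have hvd : G.Adj v d := hd.1
    have hve : G.Adj v e := he.1
    refine HasGraphMinor.of_contr noIsolated_K5 hac
      (K5_minor_of_set {v, a, b, d, e} ?_ ?_)
    · rw [Set.ncard_insert_of_notMem, Set.ncard_insert_of_notMem, Set.ncard_eq_three.mpr
        ⟨b, d, e, hdb.symm, heb.symm, hde.ne, rfl⟩]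
      · simp only [Set.mem_insert_iff, Set.mem_singleton_iff, not_or]
        exact ⟨hab, hda.symm, hea.symm⟩
      · simp only [Set.mem_insert_iff, Set.mem_singleton_iff, not_or]
        exact ⟨hva.ne, hvb.ne, hvd.ne, hve.ne⟩
    · have hne := hvc.ne
      have n1 := hcd.symm
      have n2 := hce.symm
      have n3 := hcb.symm
      have n4 := hca.symm
      intro p hp q hq hpq
      have hcb' := hbc.symm
      have h1 := hva.symm
      have h2 := hvb.symm
      have h3 := hvd.symm
      have h4 := hve.symm
      have h5 := had.symm
      have h6 := hae.symm
      have h7 := hbd.symm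
      have h8 := hbe.symm
      have h9 := hde.symm
      simp only [Set.mem_insert_iff, Set.mem_singleton_iff] at hp hq
      refine ⟨hpq, ?_, ?_, ?_⟩
      · rcases hp with rfl | rfl | rfl | rfl | rfl <;> assumption
      · rcases hq with rfl | rfl | rfl | rfl | rfl <;> assumption
      · rcases hp with rfl | rfl | rfl | rfl | rfl <;>
          rcases hq with rfl | rfl | rfl | rfl | rfl <;>
          first
            | exact absurd rfl hpq
            | exact Or.inl (by assumption)
            | exact Or.inr (Or.inl ⟨rfl, by assumption⟩)
            | exact Or.inr (Or.inr ⟨rfl, by assumption⟩)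
  by_cases hadj : G.Adj d e
  · exact main c d e hc hd he hcd hce hadj
  · refine main e c d he hc hd hce.symm hde.symm ?_
    exact (hmiss d hd.1 e he.1 c hc.1 hde.symm hcd hce.symm hadj).symm

/-- The edge bound `|E| ≤ 3|W| - 6` for graphs without a `K₅` minor whose edges all lie
inside `W`. -/
lemma edge_bound {V : Type*} [Finite V] (n : ℕ) : ∀ (W : Finset V) (G : SimpleGraph V),
    W.card = n → 3 ≤ n → (∀ a b, G.Adj a b → a ∈ W) →
    ¬ HasGraphMinor G (completeGraph (Fin 5)) → G.edgeSet.ncard + 6 ≤ 3 * n := by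
  induction n with
  | zero => intro W G _ h; omega
  | succ n ih =>
    intro W G₀ hWn hn hW₀ hK₀
    by_contra hlt
    obtain ⟨F, hF, hFn⟩ := Set.exists_subset_card_eq
      (show 3 * (n + 1) - 5 ≤ G₀.edgeSet.ncard by omega)
    -- pass to a subgraph with exactly `3|W| - 5` edges
    obtain ⟨G, hG, hGn⟩ : ∃ G, G ≤ G₀ ∧ G.edgeSet.ncard = 3 * (n + 1) - 5 := by
      refine ⟨fromEdgeSet F, ?_, ?_⟩
      · intro a b hab
        rw [fromEdgeSet_adj] at hab
        exact hF hab.1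
      · rw [edgeSet_fromEdgeSet, ← hFn]
        congr 1
        ext e
        refine ⟨fun h => h.1, fun h => ⟨h, ?_⟩⟩
        exact G₀.not_isDiag_of_mem_edgeSet (hF h)
    have hW : ∀ a b, G.Adj a b → a ∈ W := fun a b h => hW₀ a b (hG h)
    have hK : ¬ HasGraphMinor G (completeGraph (Fin 5)) := fun h => hK₀ (h.mono hG)
    have hsum := sum_ncard_neighborSet G W hW
    have hnb : ∀ v ∈ W, (G.neighborSet v).ncard ≤ n := by
      intro v hv
      have : G.neighborSet v ⊆ ((W.erase v : Finset V) : Set V) := by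
        intro b hb
        simp only [Finset.coe_erase]
        exact ⟨hW b v hb.symm, hb.ne'⟩
      have := Set.ncard_le_ncard this (Set.toFinite _)
      rw [Set.ncard_coe_finset, Finset.card_erase_of_mem hv] at this
      omega
    rcases Nat.lt_or_ge n 3 with hn3 | hn3
    · have := Finset.sum_le_card_nsmul W _ n hnb
      rw [hsum, hWn, hGn] at this
      simp only [smul_eq_mul] at this
      have : n = 2 := by omega
      subst this
      omega
    have hdeg : ∀ v ∈ W, 4 ≤ (G.neighborSet v).ncard := by
      intro v hv
      by_contra hd
      have h1 := edge_le_del G v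
      have h2 := ih (W.erase v) (del G v) (by rw [Finset.card_erase_of_mem hv]; omega) hn3
        (fun a b h => Finset.mem_erase.mpr ⟨h.2.1, hW a b h.1⟩)
        (fun h => hK (h.mono (show del G v ≤ G from fun a b h => h.1)))
      omega
    have htri : ∀ v w, G.Adj v w → 3 ≤ (G.neighborSet v ∩ G.neighborSet w).ncard := by
      intro v w hvw
      by_contra hd
      have h1 := edge_le_contr G hvw
      have hw := hW w v hvw.symm
      have hv := hW v w hvw
      have h2 := ih (W.erase w) (contr G v w) (by rw [Finset.card_erase_of_mem hw]; omega) hn3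
        (fun a b h => Finset.mem_erase.mpr ⟨h.2.1, by
          rcases h.2.2.2 with h | ⟨rfl, h'⟩ | ⟨rfl, h'⟩
          · exact hW _ _ h
          · exact hv
          · exact hW _ _ h'.symm⟩)
        (fun h => hK (h.of_contr noIsolated_K5 hvw))
      omega
    obtain ⟨v, hv, hv5⟩ : ∃ v ∈ W, (G.neighborSet v).ncard ≤ 5 := by
      by_contra hcon
      push Not at hcon
      have := Finset.card_nsmul_le_sum W _ 6 (fun v hv => hcon v hv)
      rw [hsum, hWn, hGn] at this
      simp only [smul_eq_mul] at this
      omega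
    exact hK (K5_minor_of_nbhd G v (hdeg v hv) hv5 (htri v))

/-! ### Low degree vertices; decompositions of edge sets -/

/-- In an even planar graph with at least one edge, either two nonadjacent non-isolated vertices
have degree at most `4`, or three mutually adjacent vertices have degree `2`. -/
lemma exists_low {V : Type*} [Finite V] (G : SimpleGraph V) (hp : IsPlanar G)
    (heven : ∀ v, Even (G.neighborSet v).ncard) (hne : ∃ a b, G.Adj a b) :
    (∃ u v, u ≠ v ∧ ¬ G.Adj u v ∧ u ∈ G.support ∧ v ∈ G.support ∧
      (G.neighborSet u).ncard ≤ 4 ∧ (G.neighborSet v).ncard ≤ 4) ∨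
    ∃ a b c, G.Adj a b ∧ G.Adj b c ∧ G.Adj a c ∧ (G.neighborSet a).ncard = 2 ∧
      (G.neighborSet b).ncard = 2 ∧ (G.neighborSet c).ncard = 2 := by
  have := Fintype.ofFinite V
  let W : Finset V := Finset.univ.filter fun v => v ∈ G.support
  have hWm : ∀ v, v ∈ W ↔ v ∈ G.support := fun v => by simp [W]
  have hW : ∀ a b, G.Adj a b → a ∈ W := fun a b h => (hWm a).mpr ⟨b, h⟩
  have h2 : ∀ v ∈ W, 2 ≤ (G.neighborSet v).ncard := by
    intro v hv
    obtain ⟨b, hb⟩ := (hWm v).mp hv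
    have : 0 < (G.neighborSet v).ncard := (Set.ncard_pos (Set.toFinite _)).mpr ⟨b, hb⟩
    obtain ⟨k, hk⟩ := heven v
    omega
  have hW3 : 3 ≤ W.card := by
    obtain ⟨a, b, hab⟩ := hne
    have hsub : insert a (G.neighborSet a) ⊆ (W : Set V) := by
      rintro z (rfl | hz)
      · exact hW _ _ hab
      · exact hW _ _ (G.symm.symm _ _ hz)
    have h3 := Set.ncard_le_ncard hsub (Set.toFinite _)
    rw [Set.ncard_insert_of_notMem (by simp), Set.ncard_coe_finset] at h3
    have := h2 a (hW _ _ hab)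
    omega
  have hbound := edge_bound W.card W G rfl hW3 hW hp.1
  have hsum := sum_ncard_neighborSet G W hW
  let S := W.filter fun v => (G.neighborSet v).ncard ≤ 4
  have hsplit := Finset.sum_filter_add_sum_filter_not W
    (fun v => (G.neighborSet v).ncard ≤ 4) (fun v => (G.neighborSet v).ncard)
  have hcard := Finset.card_filter_add_card_filter_not (s := W)
    (fun v => (G.neighborSet v).ncard ≤ 4)
  have hbig := Finset.card_nsmul_le_sum (W.filter fun v => ¬ (G.neighborSet v).ncard ≤ 4)
    (fun v => (G.neighborSet v).ncard) 6 (by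
      intro v hv
      have := (Finset.mem_filter.mp hv).2
      obtain ⟨k, hk⟩ := heven v
      omega)
  simp only [smul_eq_mul] at hbig
  change ∑ x ∈ S, _ + _ = _ at hsplit
  change S.card + _ = _ at hcard
  have hS : ∑ x ∈ S, (G.neighborSet x).ncard + 12 ≤ 6 * S.card := by omega
  have hSm : ∀ v, v ∈ S → v ∈ W ∧ (G.neighborSet v).ncard ≤ 4 := fun v hv =>
    Finset.mem_filter.mp hv
  by_cases hcl : ∀ a ∈ S, ∀ b ∈ S, a ≠ b → G.Adj a b
  swap
  · push Not at hcl
    obtain ⟨a, ha, b, hb, hab, hn⟩ := hcl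
    exact Or.inl ⟨a, b, hab, hn, (hWm a).mp (hSm a ha).1, (hWm b).mp (hSm b hb).1,
      (hSm a ha).2, (hSm b hb).2⟩
  right
  have hS5 : S.card < 5 := by
    by_contra h5
    exact hp.1 (K5_minor_of_set (S : Set V) (by rw [Set.ncard_coe_finset]; omega) hcl)
  have hd : ∀ v ∈ S, S.card ≤ (G.neighborSet v).ncard + 1 := by
    intro v hv
    have : ((S.erase v : Finset V) : Set V) ⊆ G.neighborSet v := by
      intro z hz
      have hz := Finset.mem_erase.mp (Finset.mem_coe.mp hz)
      exact hcl v hv z hz.2 hz.1.symm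
    have := Set.ncard_le_ncard this (Set.toFinite _)
    rw [Set.ncard_coe_finset, Finset.card_erase_of_mem hv] at this
    omega
  have hmin := Finset.card_nsmul_le_sum S (fun v => (G.neighborSet v).ncard) 2
    (fun v hv => h2 v (hSm v hv).1)
  simp only [smul_eq_mul] at hmin
  have hS4 : S.card ≠ 4 := by
    intro h4
    have := Finset.card_nsmul_le_sum S (fun v => (G.neighborSet v).ncard) 4 (fun v hv => by
      have := hd v hv
      obtain ⟨k, hk⟩ := heven v
      omega)
    simp only [smul_eq_mul] at this
    omega
  have hS3 : S.card = 3 := by omega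
  obtain ⟨a, b, c, hab, hac, hbc, habc⟩ := Finset.card_eq_three.mp hS3
  have ha : a ∈ S := by rw [habc]; simp
  have hb : b ∈ S := by rw [habc]; simp
  have hc : c ∈ S := by rw [habc]; simp
  have hs3 : ∑ x ∈ S, (G.neighborSet x).ncard = (G.neighborSet a).ncard +
      ((G.neighborSet b).ncard + (G.neighborSet c).ncard) := by
    rw [habc, Finset.sum_insert (by simp [hab, hac]), Finset.sum_pair hbc]
  have ea := h2 a (hSm a ha).1
  have eb := h2 b (hSm b hb).1
  have ec := h2 c (hSm c hc).1
  exact ⟨a, b, c, hcl a ha b hb hab, hcl b hb c hc hbc, hcl a ha c hc hac,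
    by omega, by omega, by omega⟩

/-- `F` is the edge set of a cycle on the vertex type `V`. -/
def IsCyc {V : Type*} (F : Set (Sym2 V)) : Prop :=
  ∃ a, ∃ p : (⊤ : SimpleGraph V).Walk a a, p.IsCycle ∧ {e | e ∈ p.edges} = F

/-- `Dec E k`: the edge set `E` is a disjoint union of at most `k` edge sets of cycles. -/
inductive Dec {V : Type*} : Set (Sym2 V) → ℕ → Prop
  | nil (k : ℕ) : Dec ∅ k
  | cons {F E : Set (Sym2 V)} {k : ℕ} (hF : IsCyc F) (hd : Disjoint F E) (h : Dec E k) :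
      Dec (F ∪ E) (k + 1)

lemma Dec.mono {V : Type*} {E : Set (Sym2 V)} {k : ℕ} (h : Dec E k) :
    ∀ {l : ℕ}, k ≤ l → Dec E l := by
  induction h with
  | nil k => exact fun _ => Dec.nil _
  | @cons F E k hF hd h ih =>
    intro l hl
    obtain ⟨m, rfl⟩ : ∃ m, l = m + 1 := ⟨l - 1, by omega⟩
    exact Dec.cons hF hd (ih (by omega))

lemma Dec.union {V : Type*} {E E' : Set (Sym2 V)} {k l : ℕ} (h : Dec E k) (h' : Dec E' l)
    (hd : Disjoint E E') : Dec (E ∪ E') (k + l) := by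
  induction h with
  | nil k => rw [Set.empty_union]; exact h'.mono (by omega)
  | @cons F E k hF hd' h ih =>
    rw [Set.union_assoc, show k + 1 + l = k + l + 1 by omega]
    rw [Set.disjoint_union_left] at hd
    exact Dec.cons hF (Set.disjoint_union_right.mpr ⟨hd', hd.1⟩) (ih hd.2)

/-- A decomposition in the sense of `Dec` gives the family of cycle subgraphs asked for. -/
lemma Dec.exists_finset {V : Type*} [Finite V] {G : SimpleGraph V} {E : Set (Sym2 V)} {k : ℕ}
    (h : Dec E k) : E ⊆ G.edgeSet → ∃ 𝒞 : Finset G.Subgraph,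
      (∀ C ∈ 𝒞, IsCycleSubgraph C) ∧
      (∀ C ∈ 𝒞, ∀ C' ∈ 𝒞, C ≠ C' → Disjoint C.edgeSet C'.edgeSet) ∧
      (⋃ C ∈ 𝒞, C.edgeSet) = E ∧ 𝒞.card ≤ k := by
  induction h with
  | nil k => exact fun _ => ⟨∅, by simp, by simp, by simp, by simp⟩
  | @cons F E k hF hd h ih =>
    intro hsub
    obtain ⟨𝒞, h1, h2, h3, h4⟩ := ih (Set.subset_union_right.trans hsub)
    obtain ⟨a, p, hp, hpF⟩ := hF
    have hpG : ∀ e ∈ p.edges, e ∈ G.edgeSet := fun e he => hsub (Or.inl (hpF ▸ he))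
    let q := p.transfer G hpG
    have hq : q.IsCycle := hp.transfer hpG
    have hqF : q.toSubgraph.edgeSet = F := by
      rw [← hpF, Walk.edgeSet_toSubgraph]
      ext e
      simp [q]
    have hdisj : ∀ C ∈ 𝒞, Disjoint F C.edgeSet := by
      intro C hC
      refine hd.mono_right ?_
      rw [← h3]
      exact Set.subset_biUnion_of_mem (u := fun C : G.Subgraph => C.edgeSet) hC
    refine ⟨insert q.toSubgraph 𝒞, ?_, ?_, ?_, (Finset.card_insert_le _ _).trans (by omega)⟩
    · intro C hC
      rcases Finset.mem_insert.mp hC with rfl | hC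
      · refine ⟨q.toSubgraph_connected.coe, fun v hv => ?_⟩
        exact hq.ncard_neighborSet_toSubgraph_eq_two (by simpa using hv)
      · exact h1 C hC
    · intro C hC C' hC' hne
      rcases Finset.mem_insert.mp hC with rfl | hC <;>
        rcases Finset.mem_insert.mp hC' with rfl | hC'
      · exact absurd rfl hne
      · rw [hqF]; exact hdisj C' hC'
      · rw [hqF]; exact (hdisj C hC).symm
      · exact h2 C hC C' hC' hne
    · rw [Finset.set_biUnion_insert, h3, hqF]

/-- Opening a cycle at one of its edges `cd` leaves a path from `d` to `c`. -/
lemma cycle_open {V : Type*} {H : SimpleGraph V} {a c d : V} (p : H.Walk a a) (hp : p.IsCycle)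
    (hcd : s(c, d) ∈ p.edges) : ∃ q : H.Walk d c, q.IsPath ∧ s(c, d) ∉ q.edges ∧
      ∀ e, e ∈ p.edges ↔ e = s(c, d) ∨ e ∈ q.edges := by
  have key : ∀ r : H.Walk c c, r.IsCycle → (∀ e, e ∈ p.edges ↔ e ∈ r.edges) → r.snd = d →
      ∃ q : H.Walk d c, q.IsPath ∧ s(c, d) ∉ q.edges ∧
        ∀ e, e ∈ p.edges ↔ e = s(c, d) ∨ e ∈ q.edges := by
    intro r hr hre hs
    cases r with
    | nil => exact absurd hr Walk.not_isCycle_nil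
    | cons h q =>
      rw [Walk.snd_cons] at hs
      subst hs
      rw [Walk.cons_isCycle_iff] at hr
      refine ⟨q, hr.1, hr.2, fun e => ?_⟩
      rw [hre, Walk.edges_cons, List.mem_cons]
  have hc : c ∈ p.support := p.fst_mem_support_of_mem_edges hcd
  have hr := hp.rotate hc
  have hre : ∀ e, e ∈ p.edges ↔ e ∈ (p.rotate c hc).edges := fun e =>
    ((p.rotate_edges c hc).perm.mem_iff).symm
  by_cases hs : (p.rotate c hc).snd = d
  · exact key _ hr hre hs
  · refine key (p.rotate c hc).reverse hr.reverse (fun e => by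
      rw [hre, Walk.edges_reverse, List.mem_reverse]) ?_
    rw [Walk.snd_reverse]
    have hcd' := (hre _).mp hcd
    generalize p.rotate c hc = r at hr hs hcd'
    cases r with
    | nil => exact absurd hr Walk.not_isCycle_nil
    | cons h q =>
      rw [Walk.snd_cons] at hs
      rw [Walk.cons_isCycle_iff] at hr
      rw [Walk.edges_cons, List.mem_cons] at hcd'
      rcases hcd' with hcd' | hcd'
      · rw [Sym2.eq_iff] at hcd'
        rcases hcd' with h' | h'
        · exact absurd h'.2.symm hs
        · exact absurd h'.1 h.ne
      · have := hr.1.eq_penultimate_of_mem_edges hcd'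
        rw [Walk.penultimate_cons_of_not_nil]
        · exact this.symm
        · intro hn
          exact h.ne hn.eq.symm

/-! ### Suppression of vertices and the inductive step -/

/-- Subdividing the edge `cd` of a cycle by a new vertex `u`. -/
lemma IsCyc.subdiv {V : Type*} {F : Set (Sym2 V)} (h : IsCyc F) {c d u : V}
    (hu : ∀ e ∈ F, u ∉ e) (hcd : s(c, d) ∈ F) :
    IsCyc ((F \ {s(c, d)}) ∪ {s(c, u), s(u, d)}) := by
  obtain ⟨a, p, hp, rfl⟩ := h
  obtain ⟨q, hq, hcdq, hqe⟩ := cycle_open p hp hcd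
  have hne : c ≠ d := (p.adj_of_mem_edges hcd).ne
  have huq : u ∉ q.support := by
    intro hz
    obtain ⟨e, he, hze⟩ := (Walk.mem_support_iff_exists_mem_edges_of_not_nil
      (fun hn => hne hn.eq.symm)).mp hz
    exact hu e ((hqe e).mpr (Or.inr he)) hze
  have huc : u ≠ c := fun h => huq (h ▸ q.end_mem_support)
  have hud : u ≠ d := fun h => huq (h ▸ q.start_mem_support)
  let r : (⊤ : SimpleGraph V).Walk c c :=
    Walk.cons (show (⊤ : SimpleGraph V).Adj c u from huc.symm)
      (Walk.cons (show (⊤ : SimpleGraph V).Adj u d from hud) q)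
  refine ⟨c, r, ?_, ?_⟩
  · rw [Walk.cons_isCycle_iff, Walk.cons_isPath_iff]
    refine ⟨⟨hq, huq⟩, ?_⟩
    rw [Walk.edges_cons, List.mem_cons, not_or]
    refine ⟨?_, fun h => huq (q.snd_mem_support_of_mem_edges h)⟩
    rw [Sym2.eq_iff]
    rintro (h | h)
    · exact huc h.1.symm
    · exact hne h.1
  · ext e
    simp only [r, Walk.edges_cons, List.mem_cons, Set.mem_ofPred_eq, Set.mem_union,
      Set.mem_sdiff, Set.mem_singleton_iff, Set.mem_insert_iff, hqe]
    constructor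
    · rintro (h | h | h)
      · exact Or.inr (Or.inl h)
      · exact Or.inr (Or.inr h)
      · exact Or.inl ⟨Or.inr h, fun h' => hcdq (h' ▸ h)⟩
    · rintro (⟨h | h, h'⟩ | h | h)
      · exact absurd h h'
      · exact Or.inr (Or.inr h)
      · exact Or.inl h
      · exact Or.inr (Or.inl h)

lemma Dec.subdiv {V : Type*} {E : Set (Sym2 V)} {k : ℕ} (h : Dec E k) {c d u : V} :
    (∀ e ∈ E, u ∉ e) → s(c, d) ∈ E → Dec ((E \ {s(c, d)}) ∪ {s(c, u), s(u, d)}) k := by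
  induction h with
  | nil k => exact fun _ h => absurd h (by simp)
  | @cons F E k hF hd h ih =>
    intro hu hcd
    have huE : ∀ e ∈ E, u ∉ e := fun e he => hu e (Or.inr he)
    have huF : ∀ e ∈ F, u ∉ e := fun e he => hu e (Or.inl he)
    rcases hcd with hcd | hcd
    · have hcdE : s(c, d) ∉ E := fun h' => Set.disjoint_left.mp hd hcd h'
      have := Dec.cons (hF.subdiv huF hcd) (E := E) (k := k) (by
        rw [Set.disjoint_left]
        rintro e (he | rfl | rfl) he'
        · exact Set.disjoint_left.mp hd he.1 he'
        · exact huE _ he' (by simp)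
        · exact huE _ he' (by simp)) h
      convert this using 1
      ext e
      simp only [Set.mem_union, Set.mem_sdiff, Set.mem_singleton_iff, Set.mem_insert_iff]
      by_cases hE : e ∈ E
      · have : e ≠ s(c, d) := fun h' => hcdE (h' ▸ hE)
        tauto
      · tauto
    · have hcdF : s(c, d) ∉ F := fun h' => Set.disjoint_left.mp hd h' hcd
      have := Dec.cons hF (by
        rw [Set.disjoint_left]
        rintro e he' (he | rfl | rfl)
        · exact Set.disjoint_left.mp hd he' he.1
        · exact huF _ he' (by simp)
        · exact huF _ he' (by simp)) (ih huE hcd)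
      convert this using 1
      ext e
      simp only [Set.mem_union, Set.mem_sdiff, Set.mem_singleton_iff, Set.mem_insert_iff]
      by_cases hE : e ∈ F
      · have : e ≠ s(c, d) := fun h' => hcdF (h' ▸ hE)
        tauto
      · tauto

/-- Suppression of the vertex `u`: delete it and join its neighbours to each other. -/
def suppr {V : Type*} (G : SimpleGraph V) (u : V) : SimpleGraph V where
  Adj a b := a ≠ b ∧ a ≠ u ∧ b ≠ u ∧ (G.Adj a b ∨ (G.Adj u a ∧ G.Adj u b))
  symm := ⟨fun _ _ h => ⟨h.1.symm, h.2.2.1, h.2.1, h.2.2.2.imp (fun h => h.symm) fun h => h.symm⟩⟩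
  loopless := ⟨fun _ h => h.1 rfl⟩

/-- A vertex that may be suppressed: it is isolated, or it has exactly two neighbours and these
are nonadjacent. -/
def Supprable {V : Type*} (G : SimpleGraph V) (u : V) : Prop :=
  (∀ w, ¬ G.Adj u w) ∨ ∃ c d, c ≠ d ∧ ¬ G.Adj c d ∧ ∀ w, G.Adj u w ↔ w = c ∨ w = d

lemma suppr_of_isolated {V : Type*} {G : SimpleGraph V} {u : V} (h : ∀ w, ¬ G.Adj u w) :
    suppr G u = G := by
  ext a b
  refine ⟨fun hab => hab.2.2.2.resolve_right fun h' => h _ h'.1, fun hab => ?_⟩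
  refine ⟨hab.ne, ?_, ?_, Or.inl hab⟩
  · rintro rfl
    exact h _ hab
  · rintro rfl
    exact h _ hab.symm

lemma suppr_planar {V : Type*} {G : SimpleGraph V} {u : V} (hp : IsPlanar G)
    (h : Supprable G u) : IsPlanar (suppr G u) := by
  rcases h with h | ⟨c, d, hcd, hn, hN⟩
  · rwa [suppr_of_isolated h]
  · have huc : G.Adj u c := (hN c).mpr (Or.inl rfl)
    refine (hp.contr huc.symm).mono ?_
    rintro a b ⟨hab, hau, hbu, h | ⟨h1, h2⟩⟩
    · exact ⟨hab, hau, hbu, Or.inl h⟩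
    · refine ⟨hab, hau, hbu, Or.inr ?_⟩
      rcases (hN a).mp h1 with rfl | rfl
      · exact Or.inl ⟨rfl, h2⟩
      · rcases (hN b).mp h2 with rfl | rfl
        · exact Or.inr ⟨rfl, h1⟩
        · exact absurd rfl hab

lemma suppr_even {V : Type*} [Finite V] {G : SimpleGraph V} {u : V}
    (he : ∀ v, Even (G.neighborSet v).ncard) (h : Supprable G u) (z : V) :
    Even ((suppr G u).neighborSet z).ncard := by
  rcases h with h | ⟨c, d, hcd, hn, hN⟩
  · rw [suppr_of_isolated h]; exact he z
  by_cases hzu : z = u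
  · have : (suppr G u).neighborSet z = ∅ := by
      ext b
      simp only [mem_neighborSet, Set.mem_empty_iff_false, iff_false]
      exact fun h => h.2.1 hzu
    rw [this]; simp
  -- an endpoint `c` of the new edge trades its neighbour `u` for `d`
  have key : ∀ c d, c ≠ d → ¬ G.Adj c d → (∀ w, G.Adj u w ↔ w = c ∨ w = d) →
      Even ((suppr G u).neighborSet c).ncard := by
    intro c d hcd hn hN
    have huc : G.Adj u c := (hN c).mpr (Or.inl rfl)
    have hud : G.Adj u d := (hN d).mpr (Or.inr rfl)
    have : (suppr G u).neighborSet c = insert d (G.neighborSet c \ {u}) := by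
      ext b
      simp only [mem_neighborSet, Set.mem_insert_iff, Set.mem_sdiff, Set.mem_singleton_iff]
      constructor
      · rintro ⟨h1, h2, h3, h | ⟨-, h⟩⟩
        · exact Or.inr ⟨h, h3⟩
        · rcases (hN b).mp h with rfl | rfl
          · exact absurd rfl h1
          · exact Or.inl rfl
      · rintro (rfl | ⟨h, h'⟩)
        · exact ⟨hcd, huc.ne', hud.ne', Or.inr ⟨huc, hud⟩⟩
        · exact ⟨h.ne, huc.ne', h', Or.inl h⟩
    rw [this, Set.ncard_insert_of_notMem (fun h => hn h.1),
      Set.ncard_sdiff_singleton_add_one (show u ∈ G.neighborSet c from huc.symm)]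
    exact he c
  by_cases hzc : z = c
  · rw [hzc]; exact key c d hcd hn hN
  by_cases hzd : z = d
  · rw [hzd]; exact key d c hcd.symm (fun h => hn h.symm) (fun w => (hN w).trans or_comm)
  have hzn : ¬ G.Adj u z := fun h => ((hN z).mp h).elim hzc hzd
  have : (suppr G u).neighborSet z = G.neighborSet z := by
    ext b
    simp only [mem_neighborSet]
    constructor
    · rintro ⟨-, -, -, h | h⟩
      · exact h
      · exact absurd h.1 hzn
    · intro h
      refine ⟨h.ne, hzu, ?_, Or.inl h⟩
      rintro rfl
      exact hzn h.symm
  rw [this]; exact he z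

lemma suppr_support {V : Type*} {G : SimpleGraph V} {u : V} :
    (suppr G u).support ⊆ G.support \ {u} := by
  rintro a ⟨b, -, h2, -, h | h⟩
  · exact ⟨⟨b, h⟩, h2⟩
  · exact ⟨⟨u, h.1.symm⟩, h2⟩

lemma suppr_dec {V : Type*} {G : SimpleGraph V} {u : V} (h : Supprable G u) {k : ℕ}
    (hk : Dec (suppr G u).edgeSet k) : Dec G.edgeSet k := by
  rcases h with h | ⟨c, d, hcd, hn, hN⟩
  · rwa [suppr_of_isolated h] at hk
  have huc : G.Adj u c := (hN c).mpr (Or.inl rfl)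
  have hud : G.Adj u d := (hN d).mpr (Or.inr rfl)
  have := hk.subdiv (c := c) (d := d) (u := u) (by
    intro e
    induction e with | _ a b
    intro hab
    rw [mem_edgeSet] at hab
    simp only [Sym2.mem_iff, not_or]
    exact ⟨hab.2.1.symm, hab.2.2.1.symm⟩) (by
    rw [mem_edgeSet]
    exact ⟨hcd, huc.ne', hud.ne', Or.inr ⟨huc, hud⟩⟩)
  convert this using 1
  ext e
  induction e with | _ a b
  simp only [Set.mem_union, Set.mem_sdiff, Set.mem_singleton_iff, Set.mem_insert_iff,
    mem_edgeSet]
  constructor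
  · intro hab
    by_cases hau : a = u
    · subst hau
      right
      rcases (hN b).mp hab with rfl | rfl
      · exact Or.inl Sym2.eq_swap
      · exact Or.inr rfl
    · by_cases hbu : b = u
      · subst hbu
        right
        rcases (hN a).mp hab.symm with rfl | rfl
        · exact Or.inl rfl
        · exact Or.inr Sym2.eq_swap
      · refine Or.inl ⟨⟨hab.ne, hau, hbu, Or.inl hab⟩, ?_⟩
        rw [Sym2.eq_iff]
        rintro (⟨rfl, rfl⟩ | ⟨rfl, rfl⟩)
        · exact hn hab
        · exact hn hab.symm
  · rintro (⟨⟨h1, h2, h3, h | ⟨ha, hb⟩⟩, h'⟩ | h | h)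
    · exact h
    · rcases (hN a).mp ha with rfl | rfl <;> rcases (hN b).mp hb with rfl | rfl
      · exact absurd rfl h1
      · exact absurd rfl h'
      · exact absurd Sym2.eq_swap h'
      · exact absurd rfl h1
    · rw [← mem_edgeSet, h]; exact huc.symm
    · rw [← mem_edgeSet, h]; exact hud

lemma IsCyc.even {V : Type*} [Finite V] {F : Set (Sym2 V)} (h : IsCyc F) (v : V) :
    Even {w | s(v, w) ∈ F}.ncard := by
  obtain ⟨a, p, hp, rfl⟩ := h
  have : {w | s(v, w) ∈ {e | e ∈ p.edges}} = p.toSubgraph.neighborSet v := by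
    ext w
    change s(v, w) ∈ p.edges ↔ p.toSubgraph.Adj v w
    rw [← Subgraph.mem_edgeSet, Walk.edgeSet_toSubgraph]
    rfl
  rw [this]
  by_cases hv : v ∈ p.support
  · rw [hp.ncard_neighborSet_toSubgraph_eq_two hv]
    exact even_two
  · have : p.toSubgraph.neighborSet v = ∅ := by
      ext w
      simp only [Subgraph.mem_neighborSet, Set.mem_empty_iff_false, iff_false]
      intro h
      exact hv (by simpa using p.toSubgraph.edge_vert h)
    rw [this]; simp

lemma deleteEdges_even {V : Type*} [Finite V] {G : SimpleGraph V} {F : Set (Sym2 V)}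
    (he : ∀ v, Even (G.neighborSet v).ncard) (hF : IsCyc F) (hFG : F ⊆ G.edgeSet) (v : V) :
    Even ((G.deleteEdges F).neighborSet v).ncard := by
  have h1 : (G.deleteEdges F).neighborSet v = G.neighborSet v \ {w | s(v, w) ∈ F} := by
    ext w
    simp [deleteEdges_adj]
  have h2 : {w | s(v, w) ∈ F} ⊆ G.neighborSet v := fun w hw => hFG hw
  rw [h1, Set.ncard_sdiff h2 (Set.toFinite _),
    Nat.even_sub (Set.ncard_le_ncard h2 (Set.toFinite _))]
  exact iff_of_true (he v) (hF.even v)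

/-- The theorem for all graphs with fewer than `s` non-isolated vertices: the induction
hypothesis. -/
def HypBelow (V : Type*) (s : ℕ) : Prop :=
  ∀ H : SimpleGraph V, IsPlanar H → (∀ v, Even (H.neighborSet v).ncard) →
    H.support.ncard < s → Dec H.edgeSet ((H.support.ncard - 1) / 2)

/-- The inductive step: remove a cycle such that afterwards two vertices can be suppressed. -/
lemma reduce {V : Type*} [Finite V] {G : SimpleGraph V} (hp : IsPlanar G)
    (he : ∀ v, Even (G.neighborSet v).ncard) (ih : HypBelow V G.support.ncard)
    {F : Set (Sym2 V)} (hF : IsCyc F) (hFG : F ⊆ G.edgeSet) {u v : V} (huv : u ≠ v)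
    (hu : u ∈ G.support) (hv : v ∈ G.support) (hnadj : ¬ (G.deleteEdges F).Adj u v)
    (hsu : Supprable (G.deleteEdges F) u) (hsv : Supprable (G.deleteEdges F) v)
    (hdiff : (∀ w, ¬ (G.deleteEdges F).Adj u w) ∨
      ∃ w, ¬ ((G.deleteEdges F).Adj u w ↔ (G.deleteEdges F).Adj v w)) :
    Dec G.edgeSet ((G.support.ncard - 1) / 2) := by
  set G₁ := G.deleteEdges F with hG₁
  have hle : G₁ ≤ G := deleteEdges_le _
  have hp₁ := hp.mono hle
  have he₁ := deleteEdges_even he hF hFG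
  have hNv : ∀ w, (suppr G₁ u).Adj v w ↔ G₁.Adj v w := by
    intro w
    constructor
    · rintro ⟨-, -, -, h | h⟩
      · exact h
      · exact absurd h.1 hnadj
    · intro h
      refine ⟨h.ne, huv.symm, ?_, Or.inl h⟩
      rintro rfl
      exact hnadj h.symm
  have hsv' : Supprable (suppr G₁ u) v := by
    rcases hsv with h | ⟨c, d, hcd, hn, hN⟩
    · exact Or.inl fun w hw => h w ((hNv w).mp hw)
    · refine Or.inr ⟨c, d, hcd, ?_, fun w => (hNv w).trans (hN w)⟩
      rintro ⟨-, hcu, hdu, h | ⟨h1, h2⟩⟩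
      · exact hn h
      -- otherwise `u` and `v` would have the same two neighbours
      · rcases hsu with h | ⟨c', d', hcd', hn', hN'⟩
        · exact h _ h1
        · rcases hdiff with h | ⟨w, hw⟩
          · exact h _ h1
          · apply hw
            rw [hN, hN']
            have e1 := (hN' c).mp h1
            have e2 := (hN' d).mp h2
            grind
  have hp₂ := suppr_planar hp₁ hsu
  have hp₃ := suppr_planar hp₂ hsv'
  have he₂ := suppr_even he₁ hsu
  have he₃ := suppr_even he₂ hsv'
  have hsupp : (suppr (suppr G₁ u) v).support ⊆ G.support \ {u, v} := by
    intro z hz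
    have h1 := suppr_support hz
    have h2 := suppr_support h1.1
    refine ⟨support_mono hle h2.1, ?_⟩
    rintro (h | h)
    · exact h2.2 h
    · exact h1.2 h
  have hcard := Set.ncard_le_ncard hsupp (Set.toFinite _)
  have hsub : ({u, v} : Set V) ⊆ G.support := by
    rintro z (rfl | rfl) <;> assumption
  rw [Set.ncard_sdiff hsub (Set.toFinite _), Set.ncard_pair huv] at hcard
  have hs3 : 3 ≤ G.support.ncard := by
    obtain ⟨b, hb⟩ := hu
    have h1 : 0 < (G.neighborSet u).ncard := (Set.ncard_pos (Set.toFinite _)).mpr ⟨b, hb⟩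
    have h2 : insert u (G.neighborSet u) ⊆ G.support := by
      rintro z (rfl | hz)
      · exact ⟨b, hb⟩
      · exact ⟨u, G.symm.symm _ _ hz⟩
    have h3 := Set.ncard_le_ncard h2 (Set.toFinite _)
    rw [Set.ncard_insert_of_notMem (by simp)] at h3
    obtain ⟨k, hk⟩ := he u
    omega
  have hdec := suppr_dec hsu (suppr_dec hsv' (ih _ hp₃ he₃ (by omega)))
  have hE : F ∪ G₁.edgeSet = G.edgeSet := by
    rw [hG₁, edgeSet_deleteEdges, Set.union_sdiff_cancel hFG]
  have := Dec.cons hF (by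
    rw [hG₁, edgeSet_deleteEdges]
    exact Set.disjoint_sdiff_right) hdec
  rw [hE] at this
  exact this.mono (by omega)

/-- No vertex separates two non-isolated vertices. -/
def Conn2 {V : Type*} (G : SimpleGraph V) : Prop :=
  ∀ x a b, a ∈ G.support → b ∈ G.support → a ≠ x → b ≠ x → ∃ p : G.Walk a b, x ∉ p.support

/-- A graph with a cut vertex (or a disconnected one) splits into two even parts that share at
most one vertex. -/
lemma dec_of_not_conn2 {V : Type*} [Finite V] {G : SimpleGraph V} (hp : IsPlanar G)
    (he : ∀ v, Even (G.neighborSet v).ncard) (ih : HypBelow V G.support.ncard)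
    (hc : ¬ Conn2 G) : Dec G.edgeSet ((G.support.ncard - 1) / 2) := by
  unfold Conn2 at hc
  push Not at hc
  obtain ⟨x, a, b, ha, hb, hax, hbx, hab⟩ := hc
  let A : Set V := {z | ∃ p : G.Walk a z, x ∉ p.support}
  have haA : a ∈ A := ⟨Walk.nil, by simpa using hax.symm⟩
  have hbA : b ∉ A := fun ⟨p, h⟩ => h (hab p)
  have hxA : x ∉ A := fun ⟨p, h⟩ => h p.end_mem_support
  have hstep : ∀ p q, p ∈ A → G.Adj p q → q ≠ x → q ∈ A := by
    rintro p q ⟨w, hw⟩ hpq hq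
    refine ⟨w.concat hpq, ?_⟩
    rw [Walk.support_concat]
    simp only [List.mem_append, List.mem_singleton, not_or]
    exact ⟨hw, hq.symm⟩
  let G₁ : SimpleGraph V :=
    { Adj := fun p q => G.Adj p q ∧ (p ∈ A ∨ q ∈ A)
      symm := ⟨fun _ _ h => ⟨h.1.symm, h.2.symm⟩⟩
      loopless := ⟨fun _ h => h.1.ne rfl⟩ }
  let G₂ : SimpleGraph V :=
    { Adj := fun p q => G.Adj p q ∧ ¬ (p ∈ A ∨ q ∈ A)
      symm := ⟨fun _ _ h => ⟨h.1.symm, fun h' => h.2 h'.symm⟩⟩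
      loopless := ⟨fun _ h => h.1.ne rfl⟩ }
  have hle₁ : G₁ ≤ G := fun _ _ h => h.1
  have hle₂ : G₂ ≤ G := fun _ _ h => h.1
  have hN₁ : ∀ z, z ≠ x → G₁.neighborSet z = G.neighborSet z ∨ G₁.neighborSet z = ∅ := by
    intro z hz
    by_cases hzA : z ∈ A
    · left
      ext w
      exact ⟨fun h => h.1, fun h => ⟨h, Or.inl hzA⟩⟩
    · right
      ext w
      simp only [Set.mem_empty_iff_false, iff_false]
      rintro ⟨h, h' | h'⟩
      · exact hzA h'
      · exact hzA (hstep w z h' h.symm hz)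
  have hev₁' : ∀ z, z ≠ x → Even (G₁.neighborSet z).ncard := by
    intro z hz
    rcases hN₁ z hz with h | h <;> rw [h]
    · exact he z
    · simp
  have hev₁ : ∀ z, Even (G₁.neighborSet z).ncard := by
    intro z
    by_cases hz : z = x
    · subst hz
      have := Fintype.ofFinite V
      have hs := sum_ncard_neighborSet G₁ Finset.univ (fun _ _ _ => Finset.mem_univ _)
      rw [← Finset.add_sum_erase _ _ (Finset.mem_univ z)] at hs
      have h1 : Even (∑ y ∈ Finset.univ.erase z, (G₁.neighborSet y).ncard) :=
        Finset.even_sum _ fun y hy => hev₁' y (Finset.ne_of_mem_erase hy)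
      have h2 : Even ((G₁.neighborSet z).ncard +
          ∑ y ∈ Finset.univ.erase z, (G₁.neighborSet y).ncard) := by
        rw [hs]; exact even_two_mul _
      exact (Nat.even_add.mp h2).mpr h1
    · exact hev₁' z hz
  have hev₂ : ∀ z, Even (G₂.neighborSet z).ncard := by
    intro z
    have h1 : G₂.neighborSet z = G.neighborSet z \ G₁.neighborSet z := by
      ext w
      simp only [mem_neighborSet, Set.mem_sdiff, G₁, G₂]
      tauto
    have h2 : G₁.neighborSet z ⊆ G.neighborSet z := fun w hw => hw.1
    rw [h1, Set.ncard_sdiff h2 (Set.toFinite _),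
      Nat.even_sub (Set.ncard_le_ncard h2 (Set.toFinite _))]
    exact iff_of_true (he z) (hev₁ z)
  have hs₁ : G₁.support ⊆ G.support := support_mono hle₁
  have hs₂ : G₂.support ⊆ G.support := support_mono hle₂
  have hs₁A : ∀ z ∈ G₁.support, z ∈ A ∨ z = x := by
    rintro z ⟨w, h, h' | h'⟩
    · exact Or.inl h'
    · by_cases hz : z = x
      · exact Or.inr hz
      · exact Or.inl (hstep w z h' h.symm hz)
  have hs₂A : ∀ z ∈ G₂.support, z ∉ A := by
    rintro z ⟨w, h, h'⟩ hz
    exact h' (Or.inl hz)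
  have hlt₁ : G₁.support.ncard < G.support.ncard :=
    Set.ncard_lt_ncard ⟨hs₁, fun h => (hs₁A b (h hb)).elim hbA hbx⟩ (Set.toFinite _)
  have hlt₂ : G₂.support.ncard < G.support.ncard :=
    Set.ncard_lt_ncard ⟨hs₂, fun h => hs₂A a (h ha) haA⟩ (Set.toFinite _)
  have hadd := Set.ncard_union_add_ncard_inter G₁.support G₂.support
    (Set.toFinite _) (Set.toFinite _)
  have hun := Set.ncard_le_ncard (Set.union_subset hs₁ hs₂) (Set.toFinite _)
  have hin : (G₁.support ∩ G₂.support).ncard ≤ 1 := by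
    have : G₁.support ∩ G₂.support ⊆ {x} := by
      rintro z ⟨h1, h2⟩
      exact (hs₁A z h1).resolve_left (hs₂A z h2)
    simpa using Set.ncard_le_ncard this (Set.toFinite _)
  have hd : Disjoint G₁.edgeSet G₂.edgeSet := by
    rw [Set.disjoint_left]
    intro e
    induction e with | _ p q
    intro h h'
    exact h'.2 h.2
  have := (ih G₁ (hp.mono hle₁) hev₁ hlt₁).union (ih G₂ (hp.mono hle₂) hev₂ hlt₂) hd
  have hE : G₁.edgeSet ∪ G₂.edgeSet = G.edgeSet := by
    ext e
    induction e with | _ p q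
    simp only [Set.mem_union, mem_edgeSet, G₁, G₂]
    tauto
  rw [hE] at this
  exact this.mono (by omega)

/-! ### Links and bad pairs -/

lemma isPath_append_of {V : Type*} {G : SimpleGraph V} {a b c : V} {p : G.Walk a b}
    {q : G.Walk b c} (hp : p.IsPath) (hq : q.IsPath)
    (h : ∀ z ∈ p.support, z ∈ q.support → z = b) : (p.append q).IsPath := by
  induction p with
  | nil => simpa using hq
  | @cons x y b hxy p ih =>
    rw [Walk.cons_isPath_iff] at hp
    rw [Walk.cons_append, Walk.cons_isPath_iff]
    refine ⟨ih hp.1 hq fun z hz => h z (by simp [hz]), ?_⟩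
    rw [Walk.mem_support_append_iff]
    rintro (h' | h')
    · exact hp.2 h'
    · have := h x (by simp) h'
      subst this
      exact hp.2 p.end_mem_support

/-- The two halves of a path meet only in the splitting vertex. -/
lemma isPath_append_inter {V : Type*} {G : SimpleGraph V} {a b c : V} {p : G.Walk a b}
    {q : G.Walk b c} (h : (p.append q).IsPath) : ∀ z ∈ p.support, z ∈ q.support → z = b := by
  intro z hz hz'
  by_contra hne
  exact h.ne_of_mem_support_of_append hne hz hz' rfl

lemma penultimate_append_of {V : Type*} {G : SimpleGraph V} {a b c : V} (p : G.Walk a b)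
    (q : G.Walk b c) (hbc : b ≠ c) : (p.append q).penultimate = q.penultimate := by
  induction p with
  | nil => rfl
  | cons h p ih =>
    rw [Walk.cons_append, Walk.penultimate_cons_of_not_nil, ih _ hbc]
    intro hn
    rw [Walk.nil_append_iff] at hn
    exact hbc hn.2.eq

lemma penultimate_cons_of_ne {V : Type*} {G : SimpleGraph V} {a b c : V} (h : G.Adj a b)
    (p : G.Walk b c) (hbc : b ≠ c) : (Walk.cons h p).penultimate = p.penultimate :=
  Walk.penultimate_cons_of_not_nil _ _ fun hn => hbc hn.eq

/-- The initial segment of a walk up to its first vertex in `S`, shortcut to a path. -/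
lemma first_hit {V : Type*} {G : SimpleGraph V} {a b : V} (p : G.Walk a b) (S : Set V)
    (hb : b ∈ S) : ∃ y ∈ S, ∃ q : G.Walk a y, q.IsPath ∧ (∀ z ∈ q.support, z ∈ p.support) ∧
      ∀ z ∈ q.support, z ∈ S → z = y := by
  have key : ∃ y ∈ S, ∃ q : G.Walk a y, (∀ z ∈ q.support, z ∈ p.support) ∧
      ∀ z ∈ q.support, z ∈ S → z = y := by
    induction p with
    | @nil a => exact ⟨a, hb, Walk.nil, by simp, by simp⟩
    | @cons a x b h p ih =>
      by_cases ha : a ∈ S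
      · exact ⟨a, ha, Walk.nil, by simp, by simp⟩
      · obtain ⟨y, hy, q, h1, h2⟩ := ih hb
        refine ⟨y, hy, Walk.cons h q, ?_, ?_⟩
        · intro z hz
          rw [Walk.support_cons, List.mem_cons] at hz ⊢
          exact hz.imp id (h1 z)
        · intro z hz hzS
          rw [Walk.support_cons, List.mem_cons] at hz
          rcases hz with rfl | hz
          · exact absurd hzS ha
          · exact h2 z hz hzS
  obtain ⟨y, hy, q, h1, h2⟩ := key
  have hs := q.support_bypass_subset_support
  exact ⟨y, hy, q.bypass, q.bypass_isPath, fun z hz => h1 z (hs hz),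
    fun z hz => h2 z (hs hz)⟩

/-- Two paths from `u` to `v` without common inner vertices. -/
structure IsLink {V : Type*} {G : SimpleGraph V} {u v : V} (P Q : G.Walk u v) : Prop where
  left : P.IsPath
  right : Q.IsPath
  inter : ∀ z ∈ P.support, z ∈ Q.support → z = u ∨ z = v

lemma IsLink.swap {V : Type*} {G : SimpleGraph V} {u v : V} {P Q : G.Walk u v}
    (h : IsLink P Q) : IsLink Q P :=
  ⟨h.right, h.left, fun z h1 h2 => h.inter z h2 h1⟩

lemma IsLink.reverse {V : Type*} {G : SimpleGraph V} {u v : V} {P Q : G.Walk u v}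
    (h : IsLink P Q) : IsLink P.reverse Q.reverse :=
  ⟨h.left.reverse, h.right.reverse, fun z h1 h2 => by
    rw [Walk.support_reverse, List.mem_reverse] at h1 h2
    exact (h.inter z h1 h2).symm⟩

/-- Whitney's argument: a link from `u` is pushed along the edges of a walk avoiding `u`.  The
link of the base case consists of one edge taken twice. -/
lemma exists_link_of_walk {V : Type*} {G : SimpleGraph V} (hc : Conn2 G) {u w w₀ : V}
    (r : G.Walk w w₀) : u ∉ r.support → G.Adj u w₀ → ∃ P Q : G.Walk u w, IsLink P Q := by
  induction r with
  | @nil w =>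
    intro hu huw
    refine ⟨Walk.cons huw Walk.nil, Walk.cons huw Walk.nil, ?_, ?_, ?_⟩
    · simpa using huw.ne
    · simpa using huw.ne
    · intro z hz _
      simpa using hz
  | @cons w w₂ w₀ hww r ih =>
    intro hu huw
    rw [Walk.support_cons, List.mem_cons, not_or] at hu
    obtain ⟨P, Q, hPQ⟩ := ih hu.2 huw
    have huw2 : u ≠ w₂ := fun h => hu.2 (h ▸ r.start_mem_support)
    -- the case that `w` already lies on the link
    have hon : ∀ P Q : G.Walk u w₂, IsLink P Q → w ∈ P.support →
        ∃ P' Q' : G.Walk u w, IsLink P' Q' := by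
      intro P Q hPQ hw
      obtain ⟨P₁, P₂, h1, h2, rfl⟩ := hPQ.left.mem_support_iff_exists_append.mp hw
      have hinter := isPath_append_inter hPQ.left
      refine ⟨P₁, Q.append P₂.reverse, h1, isPath_append_of hPQ.right h2.reverse ?_, ?_⟩
      · intro z hz hz'
        rw [Walk.support_reverse, List.mem_reverse] at hz'
        refine (hPQ.inter z (by rw [Walk.mem_support_append_iff]; exact Or.inr hz') hz).resolve_left
          ?_
        rintro rfl
        exact hu.1 (hinter z P₁.start_mem_support hz')
      · intro z hz hz'
        rw [Walk.mem_support_append_iff, Walk.support_reverse, List.mem_reverse] at hz'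
        rcases hz' with hz' | hz'
        · rcases hPQ.inter z (by rw [Walk.mem_support_append_iff]; exact Or.inl hz) hz' with h | h
          · exact Or.inl h
          · subst h
            exact Or.inr (hinter z hz P₂.end_mem_support)
        · exact Or.inr (hinter z hz hz')
    by_cases hwP : w ∈ P.support
    · exact hon P Q hPQ hwP
    by_cases hwQ : w ∈ Q.support
    · exact hon Q P hPQ.swap hwQ
    obtain ⟨R₀, hR₀⟩ := hc w₂ w u ⟨w₂, hww⟩ ⟨w₀, huw⟩ hww.ne huw2
    obtain ⟨y, hy, R, hR, hR1, hR2⟩ := first_hit R₀ {z | z ∈ P.support ∨ z ∈ Q.support}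
      (Or.inl P.start_mem_support)
    have hy2 : y ≠ w₂ := fun h => hR₀ (h ▸ hR1 y R.end_mem_support)
    have hoff : ∀ P Q : G.Walk u w₂, IsLink P Q → w ∉ P.support → w ∉ Q.support →
        (∀ z ∈ R.support, z ∈ P.support ∨ z ∈ Q.support → z = y) → y ∈ P.support →
        ∃ P' Q' : G.Walk u w, IsLink P' Q' := by
      intro P Q hPQ hwP hwQ hR2 hy
      obtain ⟨P₁, P₂, h1, h2, rfl⟩ := hPQ.left.mem_support_iff_exists_append.mp hy
      have hinter := isPath_append_inter hPQ.left
      refine ⟨P₁.append R.reverse, Q.concat hww.symm, isPath_append_of h1 hR.reverse ?_,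
        hPQ.right.concat hwQ hww.symm, ?_⟩
      · intro z hz hz'
        rw [Walk.support_reverse, List.mem_reverse] at hz'
        exact hR2 z hz' (Or.inl (by rw [Walk.mem_support_append_iff]; exact Or.inl hz))
      · intro z hz hz'
        rw [Walk.support_concat, List.mem_append, List.mem_singleton] at hz'
        rcases hz' with hz' | hz'
        swap
        · exact Or.inr hz'
        left
        rw [Walk.mem_support_append_iff, Walk.support_reverse, List.mem_reverse] at hz
        have hzP : z ∈ P₁.support := by
          rcases hz with hz | hz
          · exact hz
          · have := hR2 z hz (Or.inr hz')
            subst this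
            exact P₁.end_mem_support
        refine (hPQ.inter z (by rw [Walk.mem_support_append_iff]; exact Or.inl hzP)
          hz').resolve_right ?_
        rintro rfl
        exact hy2 (hinter z hzP P₂.end_mem_support).symm
    rcases hy with hy | hy
    · exact hoff P Q hPQ hwP hwQ hR2 hy
    · exact hoff Q P hPQ.swap hwQ hwP (fun z hz h => hR2 z hz h.symm) hy

lemma exists_link {V : Type*} {G : SimpleGraph V} (hc : Conn2 G) {u v : V} (huv : u ≠ v)
    (hu : u ∈ G.support) (hv : v ∈ G.support) : ∃ P Q : G.Walk u v, IsLink P Q := by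
  obtain ⟨w₀, hw₀⟩ := hu
  obtain ⟨r, hr⟩ := hc u v w₀ hv ⟨u, hw₀.symm⟩ huv.symm hw₀.ne'
  exact exists_link_of_walk hc r hr hw₀

/-- If the cycle formed by a link uses the edges `ua` and `ub`, the two remaining edges at `u`
go to adjacent vertices `c, d` that have no neighbour among `a, b`. -/
def Bad {V : Type*} (G : SimpleGraph V) (u a b : V) : Prop :=
  ∃ c d, c ≠ d ∧ G.Adj u c ∧ G.Adj u d ∧ c ≠ a ∧ c ≠ b ∧ d ≠ a ∧ d ≠ b ∧ G.Adj c d ∧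
    ¬ G.Adj a c ∧ ¬ G.Adj a d ∧ ¬ G.Adj b c ∧ ¬ G.Adj b d

lemma Bad.swap {V : Type*} {G : SimpleGraph V} {u a b : V} (h : Bad G u a b) : Bad G u b a := by
  obtain ⟨c, d, h1, h2, h3, h4, h5, h6, h7, h8, h9, h10, h11, h12⟩ := h
  exact ⟨c, d, h1, h2, h3, h5, h4, h7, h6, h8, h11, h12, h9, h10⟩

lemma mem_of_four {V : Type*} [Finite V] {G : SimpleGraph V} {u x y p q z : V}
    (h4 : (G.neighborSet u).ncard ≤ 4) (hx : G.Adj u x) (hy : G.Adj u y) (hp : G.Adj u p)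
    (hq : G.Adj u q) (hxy : x ≠ y) (hxp : x ≠ p) (hxq : x ≠ q) (hyp : y ≠ p) (hyq : y ≠ q)
    (hpq : p ≠ q) (hz : G.Adj u z) : z = x ∨ z = y ∨ z = p ∨ z = q := by
  have hc : ({x, y, p, q} : Set V).ncard = 4 := by
    rw [Set.ncard_insert_of_notMem (by simp [hxy, hxp, hxq]),
      Set.ncard_insert_of_notMem (by simp [hyp, hyq]), Set.ncard_pair hpq]
  have hsub : ({x, y, p, q} : Set V) ⊆ G.neighborSet u := by
    rintro w (rfl | rfl | rfl | rfl) <;> assumption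
  have := Set.eq_of_subset_of_ncard_le hsub (by omega) (Set.toFinite _)
  have hz' : z ∈ G.neighborSet u := hz
  rw [← this] at hz'
  simpa using hz'

lemma not_bad_of_adj {V : Type*} [Finite V] {G : SimpleGraph V} {u x y z : V}
    (h4 : (G.neighborSet u).ncard ≤ 4) (hx : G.Adj u x) (hy : G.Adj u y) (hz : G.Adj u z)
    (hxy : x ≠ y) (hzy : z ≠ y) (hxz : G.Adj x z) : ¬ Bad G u x y := by
  rintro ⟨p, q, hpq, hp, hq, hpx, hpy, hqx, hqy, -, h1, h2, -, -⟩
  rcases mem_of_four h4 hx hy hp hq hxy hpx.symm hqx.symm hpy.symm hqy.symm hpq hz with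
    rfl | rfl | rfl | rfl
  · exact hxz.ne rfl
  · exact hzy rfl
  · exact h1 hxz
  · exact h2 hxz

/-- Two different bad pairs at `u` are disjoint. -/
lemma bad_unique {V : Type*} [Finite V] {G : SimpleGraph V} {u a b c : V}
    (h4 : (G.neighborSet u).ncard ≤ 4) (ha : G.Adj u a) (hb : G.Adj u b) (hc : G.Adj u c)
    (hab : a ≠ b) (hac : a ≠ c) (h : Bad G u a b) (hbad : Bad G u a c) : b = c := by
  by_contra hbc
  obtain ⟨p, q, hpq, hp, hq, hpa, hpb, hqa, hqb, hadj, -⟩ := h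
  rcases mem_of_four h4 ha hb hp hq hab hpa.symm hqa.symm hpb.symm hqb.symm hpq hc with
    rfl | rfl | rfl | rfl
  · exact hac rfl
  · exact hbc rfl
  · exact not_bad_of_adj h4 hc ha hq hac.symm hqa hadj hbad.swap
  · exact not_bad_of_adj h4 hc ha hp hac.symm hpa hadj.symm hbad.swap

/-! ### Minimal NB links -/

/-- A link whose ends are both not bad. -/
structure IsNB {V : Type*} {G : SimpleGraph V} {u v : V} (P Q : G.Walk u v) : Prop where
  link : IsLink P Q
  start : ¬ Bad G u P.snd Q.snd
  finish : ¬ Bad G v P.penultimate Q.penultimate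

lemma IsNB.swap {V : Type*} {G : SimpleGraph V} {u v : V} {P Q : G.Walk u v}
    (h : IsNB P Q) : IsNB Q P :=
  ⟨h.link.swap, fun h' => h.start h'.swap, fun h' => h.finish h'.swap⟩

lemma IsNB.reverse {V : Type*} {G : SimpleGraph V} {u v : V} {P Q : G.Walk u v}
    (h : IsNB P Q) : IsNB P.reverse Q.reverse :=
  ⟨h.link.reverse, by simpa using h.finish, by simpa using h.start⟩

section ends

variable {V : Type*} {G : SimpleGraph V} {u v : V} {P Q : G.Walk u v}

lemma adj_snd_of_ne (huv : u ≠ v) (P : G.Walk u v) : G.Adj u P.snd :=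
  P.adj_snd fun hn => huv hn.eq

lemma adj_pen_of_ne (huv : u ≠ v) (P : G.Walk u v) : G.Adj v P.penultimate :=
  (P.adj_penultimate fun hn => huv hn.eq).symm

lemma IsLink.snd_ne (h : IsLink P Q) (huv : u ≠ v) (hn : ¬ G.Adj u v) : P.snd ≠ Q.snd := by
  intro he
  have h1 : P.snd ∈ P.support := P.getVert_mem_support 1
  have h2 : P.snd ∈ Q.support := he ▸ Q.getVert_mem_support 1
  have h3 := adj_snd_of_ne huv P
  rcases h.inter _ h1 h2 with h' | h'
  · exact h3.ne h'.symm
  · exact hn (h' ▸ h3)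

lemma IsLink.pen_ne (h : IsLink P Q) (huv : u ≠ v) (hn : ¬ G.Adj u v) :
    P.penultimate ≠ Q.penultimate := by
  have := h.reverse.snd_ne huv.symm (fun h' => hn h'.symm)
  simpa using this

/-- Any link can be changed so that it is not bad at `u`, without making it bad at `v`.  If `u` is
bad with remaining neighbours `c, d`, then `u` together with a walk from `c` that avoids `u` up to
the link gives a new link through `uc`, and no such link is bad at `u` as `cd` is an edge. -/
lemma fix_start [Finite V] (hc : Conn2 G) (huv : u ≠ v) (hn : ¬ G.Adj u v)
    (hu4 : (G.neighborSet u).ncard ≤ 4) (hv4 : (G.neighborSet v).ncard ≤ 4)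
    (h : IsLink P Q) : ∃ P' Q' : G.Walk u v, IsLink P' Q' ∧ ¬ Bad G u P'.snd Q'.snd ∧
      (¬ Bad G v P.penultimate Q.penultimate → ¬ Bad G v P'.penultimate Q'.penultimate) := by
  by_cases hbad : Bad G u P.snd Q.snd
  swap
  · exact ⟨P, Q, h, hbad, id⟩
  obtain ⟨c, d, hcd, huc, hud, hcP, hcQ, hdP, hdQ, hadj, -⟩ := hbad
  have hPs := adj_snd_of_ne huv P
  have hQs := adj_snd_of_ne huv Q
  have hnb : ∀ y, G.Adj u y → c ≠ y → d ≠ y → ¬ Bad G u c y := fun y hy h1 h2 =>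
    not_bad_of_adj hu4 huc hy hud h1 h2 hadj
  have hcv : c ≠ v := fun h => hn (h ▸ huc)
  obtain ⟨R₀, hR₀⟩ := hc u c v ⟨u, huc.symm⟩ ⟨_, adj_pen_of_ne huv P⟩ huc.ne' huv.symm
  obtain ⟨y, hy, R, hR, hR1, hR2⟩ := first_hit R₀ {z | z ∈ P.support ∨ z ∈ Q.support}
    (Or.inl P.end_mem_support)
  have huR : u ∉ R.support := fun h => hR₀ (hR1 u h)
  by_cases hyv : y = v
  · subst hyv
    have hpath : (Walk.cons huc R).IsPath := by
      rw [Walk.cons_isPath_iff]; exact ⟨hR, huR⟩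
    have hl : ∀ S : G.Walk u y, S.IsPath → (∀ z ∈ S.support, z ∈ P.support ∨ z ∈ Q.support) →
        IsLink (Walk.cons huc R) S := by
      intro S hS hsub
      refine ⟨hpath, hS, fun z hz hz' => ?_⟩
      rw [Walk.support_cons, List.mem_cons] at hz
      exact hz.imp id fun hz => hR2 z hz (hsub z hz')
    have hlP := hl P h.left fun z hz => Or.inl hz
    have hlQ := hl Q h.right fun z hz => Or.inr hz
    by_cases hb : Bad G y (Walk.cons huc R).penultimate P.penultimate
    · refine ⟨_, Q, hlQ, by rw [Walk.snd_cons]; exact hnb _ hQs hcQ hdQ, fun _ hb' => ?_⟩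
      refine h.pen_ne huv hn (bad_unique hv4 (adj_pen_of_ne huv _) (adj_pen_of_ne huv _)
        (adj_pen_of_ne huv _) (hlP.pen_ne huv hn) (hlQ.pen_ne huv hn) hb hb')
    · exact ⟨_, P, hlP, by rw [Walk.snd_cons]; exact hnb _ hPs hcP hdP, fun _ => hb⟩
  -- the detour joins the path on which its last vertex lies
  have main : ∀ P Q : G.Walk u v, IsLink P Q → (∀ z ∈ R.support, z ∈ P.support ∨ z ∈ Q.support →
      z = y) → y ∈ P.support → c ≠ Q.snd → d ≠ Q.snd →
      ∃ P' : G.Walk u v, IsLink P' Q ∧ ¬ Bad G u P'.snd Q.snd ∧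
        P'.penultimate = P.penultimate := by
    intro P Q h hR2 hy hcQ hdQ
    obtain ⟨P₁, P₂, h1, h2, rfl⟩ := h.left.mem_support_iff_exists_append.mp hy
    have hinter := isPath_append_inter h.left
    have hyu : y ≠ u := fun h => huR (h ▸ R.end_mem_support)
    have huP₂ : u ∉ P₂.support := fun hz => hyu (hinter u P₁.start_mem_support hz).symm
    have hp : (Walk.cons huc (R.append P₂)).IsPath := by
      rw [Walk.cons_isPath_iff, Walk.mem_support_append_iff]
      refine ⟨isPath_append_of hR h2 fun z hz hz' => hR2 z hz (Or.inl ?_),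
        fun h' => h'.elim huR huP₂⟩
      rw [Walk.mem_support_append_iff]; exact Or.inr hz'
    refine ⟨Walk.cons huc (R.append P₂), ⟨hp, h.right, ?_⟩,
      by rw [Walk.snd_cons]; exact hnb _ (adj_snd_of_ne huv Q) hcQ hdQ, ?_⟩
    · intro z hz hz'
      rw [Walk.support_cons, List.mem_cons, Walk.mem_support_append_iff] at hz
      rcases hz with hz | hz | hz
      · exact Or.inl hz
      · have := hR2 z hz (Or.inr hz')
        exact h.inter z (this ▸ hy) hz'
      · exact h.inter z (by rw [Walk.mem_support_append_iff]; exact Or.inr hz) hz'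
    · rw [penultimate_cons_of_ne _ _ hcv, penultimate_append_of _ _ hyv,
        penultimate_append_of _ _ hyv]
  rcases hy with hy | hy
  · obtain ⟨P', h1, h2, h3⟩ := main P Q h hR2 hy hcQ hdQ
    exact ⟨P', Q, h1, h2, fun hb => by rwa [h3]⟩
  · obtain ⟨Q', h1, h2, h3⟩ := main Q P h.swap (fun z hz h => hR2 z hz h.symm) hy hcP hdP
    exact ⟨Q', P, h1, h2, fun hb hb' => hb (by rw [h3] at hb'; exact hb'.swap)⟩

lemma exists_nb [Finite V] (hc : Conn2 G) (huv : u ≠ v) (hn : ¬ G.Adj u v)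
    (hu : u ∈ G.support) (hv : v ∈ G.support)
    (hu4 : (G.neighborSet u).ncard ≤ 4) (hv4 : (G.neighborSet v).ncard ≤ 4) :
    ∃ P Q : G.Walk u v, IsNB P Q := by
  obtain ⟨P, Q, h⟩ := exists_link hc huv hu hv
  obtain ⟨P₁, Q₁, h₁, hb₁, -⟩ := fix_start hc huv hn hu4 hv4 h
  obtain ⟨P₂, Q₂, h₂, hb₂, hb₃⟩ := fix_start hc huv.symm (fun h => hn h.symm) hv4 hu4 h₁.reverse
  refine ⟨P₂.reverse, Q₂.reverse, h₂.reverse, ?_, ?_⟩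
  · simpa using hb₃ (by simpa using hb₁)
  · simpa using hb₂

/-- An NB link of minimal total length. -/
def IsMinNB (P Q : G.Walk u v) : Prop :=
  IsNB P Q ∧ ∀ P' Q' : G.Walk u v, IsNB P' Q' → P.length + Q.length ≤ P'.length + Q'.length

lemma IsMinNB.swap (h : IsMinNB P Q) : IsMinNB Q P :=
  ⟨h.1.swap, fun P' Q' h' => by have := h.2 P' Q' h'; omega⟩

lemma IsMinNB.reverse (h : IsMinNB P Q) : IsMinNB P.reverse Q.reverse :=
  ⟨h.1.reverse, fun P' Q' h' => by
    have := h.2 _ _ h'.reverse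
    simpa using this⟩

lemma exists_min (h : ∃ P Q : G.Walk u v, IsNB P Q) : ∃ P Q : G.Walk u v, IsMinNB P Q := by
  have hex : ∃ n, ∃ P Q : G.Walk u v, IsNB P Q ∧ P.length + Q.length = n := by
    obtain ⟨P, Q, h⟩ := h
    exact ⟨_, P, Q, h, rfl⟩
  obtain ⟨P, Q, h1, h2⟩ := Nat.find_spec hex
  refine ⟨P, Q, h1, fun P' Q' h' => ?_⟩
  rw [h2]
  have hlen : ∃ P Q : G.Walk u v, IsNB P Q ∧ P.length + Q.length = P'.length + Q'.length :=
    ⟨P', Q', h', rfl⟩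
  exact Nat.find_min' hex hlen

/-- Shortcut of a path from `u` to a later neighbour `c` of `u`. -/
lemma shortcut (hP : P.IsPath) {c : V} (hc : c ∈ P.support) (huc : G.Adj u c) (hcs : c ≠ P.snd)
    (hcv : c ≠ v) : ∃ P' : G.Walk u v, P'.IsPath ∧ P'.snd = c ∧
      P'.penultimate = P.penultimate ∧ (∀ z ∈ P'.support, z ∈ P.support) ∧
      P'.length < P.length := by
  cases P with
  | nil => exact absurd (by simpa using hc) huc.ne'
  | @cons _ x _ hux P =>
    rw [Walk.cons_isPath_iff] at hP
    rw [Walk.support_cons, List.mem_cons] at hc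
    have hc := hc.resolve_left huc.ne'
    rw [Walk.snd_cons] at hcs
    obtain ⟨P₁, P₂, h1, h2, rfl⟩ := hP.1.mem_support_iff_exists_append.mp hc
    have hu2 : u ∉ P₂.support := fun h => hP.2 (by
      rw [Walk.mem_support_append_iff]; exact Or.inr h)
    have hl : 0 < P₁.length := by
      by_contra h0
      exact hcs (Walk.eq_of_length_eq_zero (by omega : P₁.length = 0)).symm
    refine ⟨Walk.cons huc P₂, ?_, by simp, ?_, ?_, ?_⟩
    · rw [Walk.cons_isPath_iff]; exact ⟨h2, hu2⟩
    · rw [penultimate_cons_of_ne _ _ hcv, ← Walk.cons_append, penultimate_append_of _ _ hcv]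
    · intro z hz
      rw [Walk.support_cons, List.mem_cons] at hz ⊢
      rw [Walk.mem_support_append_iff]
      exact hz.imp id Or.inr
    · simp only [Walk.length_cons, Walk.length_append]
      omega

/-- On a minimal link, a shortcut at `u` through a vertex of the link must create a bad end. -/
lemma IsMinNB.bad_of_mem (h : IsMinNB P Q) (hn : ¬ G.Adj u v) {c : V}
    (hc : c ∈ P.support) (huc : G.Adj u c) (hcs : c ≠ P.snd) : Bad G u c Q.snd := by
  have hcv : c ≠ v := fun h => hn (h ▸ huc)
  obtain ⟨P', h1, h2, h3, h4, h5⟩ := shortcut h.1.link.left hc huc hcs hcv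
  by_contra hb
  have := h.2 P' Q ⟨⟨h1, h.1.link.right, fun z hz => h.1.link.inter z (h4 z hz)⟩,
    by rwa [h2], by rw [h3]; exact h.1.finish⟩
  omega

end ends

/-! ### Usable links and rerouting -/

section good

variable {V : Type*} {G : SimpleGraph V} {u v : V} {P Q : G.Walk u v}

/-- The neighbours of `u` other than `a` and `b`. -/
def Res (G : SimpleGraph V) (u a b w : V) : Prop := G.Adj u w ∧ w ≠ a ∧ w ≠ b

lemma res_comm {a b w : V} : Res G u a b w ↔ Res G u b a w :=
  ⟨fun h => ⟨h.1, h.2.2, h.2.1⟩, fun h => ⟨h.1, h.2.2, h.2.1⟩⟩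

/-- The edge set of the cycle formed by a link. -/
def linkEdges (P Q : G.Walk u v) : Set (Sym2 V) := {e | e ∈ P.edges ∨ e ∈ Q.edges}

lemma linkEdges_comm : linkEdges P Q = linkEdges Q P := by
  ext e
  exact or_comm

lemma linkEdges_reverse : linkEdges P.reverse Q.reverse = linkEdges P Q := by
  ext e
  simp [linkEdges]

/-- Adjacent remaining neighbours of `u` are joined by an edge of `E`. -/
def GoodEnd (G : SimpleGraph V) (E : Set (Sym2 V)) (u a b : V) : Prop :=
  ∀ c d, Res G u a b c → Res G u a b d → G.Adj c d → s(c, d) ∈ E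

/-- The remaining neighbours of `u` are pairwise nonadjacent. -/
def StrongEnd (G : SimpleGraph V) (u a b : V) : Prop :=
  ∀ c d, Res G u a b c → Res G u a b d → ¬ G.Adj c d

lemma two_le_length (huv : u ≠ v) (hn : ¬ G.Adj u v) (P : G.Walk u v) : 2 ≤ P.length := by
  cases P with
  | nil => exact absurd rfl huv
  | cons h p =>
    cases p with
    | nil => exact absurd h hn
    | cons h' p => simp only [Walk.length_cons]; omega

lemma IsLink.isCyc (h : IsLink P Q) (huv : u ≠ v) (hn : ¬ G.Adj u v) :
    IsCyc (linkEdges P Q) := by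
  have hc : (P.append Q.reverse).IsCycle := by
    refine h.left.isCycle_append h.right.reverse ?_ (Or.inl (two_le_length huv hn P))
    intro z hz hz'
    have h1 : z ≠ u := by
      have := h.left.support_nodup
      rw [← P.cons_tail_support, List.nodup_cons] at this
      rintro rfl
      exact this.1 hz
    have h2 : z ≠ v := by
      have := h.right.reverse.support_nodup
      rw [← Q.reverse.cons_tail_support, List.nodup_cons] at this
      rintro rfl
      exact this.1 hz'
    have h3 := List.mem_of_mem_tail hz'
    rw [Walk.support_reverse, List.mem_reverse] at h3
    exact (h.inter z (List.mem_of_mem_tail hz) h3).elim h1 h2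
  refine ⟨u, (P.append Q.reverse).mapLe le_top, hc.mapLe le_top, ?_⟩
  ext e
  simp [linkEdges]

lemma linkEdges_subset : linkEdges P Q ⊆ G.edgeSet := by
  rintro e (h | h)
  · exact P.edges_subset_edgeSet h
  · exact Q.edges_subset_edgeSet h

lemma IsLink.adj_start (h : IsLink P Q) (huv : u ≠ v) (w : V) :
    (G.deleteEdges (linkEdges P Q)).Adj u w ↔ Res G u P.snd Q.snd w := by
  have key : ∀ P : G.Walk u v, P.IsPath → (s(u, w) ∈ P.edges ↔ w = P.snd) := by
    intro P hP
    constructor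
    · exact fun h => hP.eq_snd_of_mem_edges h
    · rintro rfl
      exact P.mk_start_snd_mem_edges fun hn => huv hn.eq
  rw [deleteEdges_adj]
  change _ ∧ ¬ (_ ∨ _) ↔ _
  rw [key P h.left, key Q h.right, not_or]
  rfl

lemma IsLink.adj_end (h : IsLink P Q) (huv : u ≠ v) (w : V) :
    (G.deleteEdges (linkEdges P Q)).Adj v w ↔ Res G v P.penultimate Q.penultimate w := by
  have := h.reverse.adj_start huv.symm w
  rwa [linkEdges_reverse, Walk.snd_reverse, Walk.snd_reverse] at this

lemma supprable_of_good [Finite V] (he : ∀ v, Even (G.neighborSet v).ncard) {F : Set (Sym2 V)}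
    (hF : IsCyc F) (hFG : F ⊆ G.edgeSet) {a b : V} (ha : G.Adj u a) (hb : G.Adj u b) (hab : a ≠ b)
    (hu4 : (G.neighborSet u).ncard ≤ 4)
    (hadj : ∀ w, (G.deleteEdges F).Adj u w ↔ Res G u a b w) (hg : GoodEnd G F u a b) :
    Supprable (G.deleteEdges F) u := by
  have hev := deleteEdges_even he hF hFG u
  have hsub : (G.deleteEdges F).neighborSet u ⊆ G.neighborSet u \ {a, b} := by
    intro w hw
    have := (hadj w).mp hw
    refine ⟨this.1, ?_⟩
    rintro (h | h)
    · exact this.2.1 h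
    · exact this.2.2 h
  have hc := Set.ncard_le_ncard hsub (Set.toFinite _)
  rw [Set.ncard_sdiff (by rintro z (rfl | rfl) <;> assumption) (Set.toFinite _),
    Set.ncard_pair hab] at hc
  rcases Nat.eq_zero_or_pos ((G.deleteEdges F).neighborSet u).ncard with h0 | h0
  · rw [Set.ncard_eq_zero (Set.toFinite _)] at h0
    left
    intro w hw
    have : w ∈ (G.deleteEdges F).neighborSet u := hw
    rw [h0] at this
    exact this
  · have h2 : ((G.deleteEdges F).neighborSet u).ncard = 2 := by
      obtain ⟨k, hk⟩ := hev
      omega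
    obtain ⟨c, d, hcd, hN⟩ := Set.ncard_eq_two.mp h2
    have hm : ∀ w, (G.deleteEdges F).Adj u w ↔ w = c ∨ w = d := by
      intro w
      rw [← mem_neighborSet, hN]
      rfl
    refine Or.inr ⟨c, d, hcd, ?_, hm⟩
    rw [deleteEdges_adj]
    rintro ⟨h1, h2⟩
    exact h2 (hg c d ((hadj c).mp ((hm c).mpr (Or.inl rfl)))
      ((hadj d).mp ((hm d).mpr (Or.inr rfl))) h1)

/-- The data common to all configurations below: `G` is even, planar and 2-connected, `u` and `v`
are nonadjacent vertices of degree `2` or `4`, and the theorem holds for smaller graphs. -/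
structure Setup (G : SimpleGraph V) (u v : V) : Prop where
  planar : IsPlanar G
  even : ∀ v, Even (G.neighborSet v).ncard
  ih : HypBelow V G.support.ncard
  conn : Conn2 G
  ne : u ≠ v
  nadj : ¬ G.Adj u v
  hu : u ∈ G.support
  hv : v ∈ G.support
  hu4 : (G.neighborSet u).ncard ≤ 4
  hv4 : (G.neighborSet v).ncard ≤ 4

lemma Setup.symm (h : Setup G u v) : Setup G v u :=
  ⟨h.planar, h.even, h.ih, h.conn, h.ne.symm, fun h' => h.nadj h'.symm, h.hv, h.hu, h.hv4, h.hu4⟩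

/-- A link is usable if, after removing its cycle, both ends can be suppressed and the two
suppressions do not add the same edge. -/
lemma Setup.good_dec [Finite V] (S : Setup G u v) (h : IsLink P Q)
    (hgu : GoodEnd G (linkEdges P Q) u P.snd Q.snd)
    (hgv : GoodEnd G (linkEdges P Q) v P.penultimate Q.penultimate)
    (hdiff : (∀ w, Res G u P.snd Q.snd w ↔ Res G v P.penultimate Q.penultimate w) →
      ∀ w, ¬ Res G u P.snd Q.snd w) :
    Dec G.edgeSet ((G.support.ncard - 1) / 2) := by
  have hF := h.isCyc S.ne S.nadj
  have hFG : linkEdges P Q ⊆ G.edgeSet := linkEdges_subset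
  have hU := h.adj_start S.ne
  have hV := h.adj_end S.ne
  refine reduce S.planar S.even S.ih hF hFG S.ne S.hu S.hv
    (fun h' => S.nadj ((hU v).mp h').1)
    (supprable_of_good S.even hF hFG (adj_snd_of_ne S.ne P) (adj_snd_of_ne S.ne Q)
      (h.snd_ne S.ne S.nadj) S.hu4 hU hgu)
    (supprable_of_good S.even hF hFG (adj_pen_of_ne S.ne P) (adj_pen_of_ne S.ne Q)
      (h.pen_ne S.ne S.nadj) S.hv4 hV hgv) ?_
  by_cases hall : ∀ w, Res G u P.snd Q.snd w ↔ Res G v P.penultimate Q.penultimate w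
  · exact Or.inl fun w hw => hdiff hall w ((hU w).mp hw)
  · push Not at hall
    obtain ⟨w, hw⟩ := hall
    refine Or.inr ⟨w, ?_⟩
    rw [hU, hV]
    tauto

/-- The remaining neighbours `c, d` of `u` are adjacent, off the link, and one of them is adjacent
to a neighbour of `u` on the link. -/
structure Alpha (P Q : G.Walk u v) (c d : V) : Prop where
  ne : c ≠ d
  resc : Res G u P.snd Q.snd c
  resd : Res G u P.snd Q.snd d
  adj : G.Adj c d
  cP : c ∉ P.support
  cQ : c ∉ Q.support
  dP : d ∉ P.support
  dQ : d ∉ Q.support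
  cross : G.Adj P.snd c ∨ G.Adj P.snd d ∨ G.Adj Q.snd c ∨ G.Adj Q.snd d

/-- The link `P', Q'` arises from `P, Q` by rerouting near `u` through `c` and `d`, such that
afterwards the two remaining neighbours of `u` are joined by an edge of the link. -/
def Rerouted (P Q P' Q' : G.Walk u v) (c d : V) : Prop :=
  IsLink P' Q' ∧ P'.penultimate = P.penultimate ∧ Q'.penultimate = Q.penultimate ∧
  (∀ z ∈ P'.support, z ∈ P.support ∨ z = c ∨ z = d) ∧
  (∀ z ∈ Q'.support, z ∈ Q.support ∨ z = c ∨ z = d) ∧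
  (∀ e ∈ linkEdges P Q, u ∉ e → e ∈ linkEdges P' Q') ∧
  ∃ x e, (x = P.snd ∨ x = Q.snd) ∧ (e = c ∨ e = d) ∧ G.Adj x e ∧ s(x, e) ∈ linkEdges P' Q' ∧
    ∀ w, Res G u P'.snd Q'.snd w ↔ w = x ∨ w = e

lemma Rerouted.swap {P' Q' : G.Walk u v} {c d : V} (h : Rerouted P Q P' Q' c d) :
    Rerouted Q P Q' P' c d := by
  obtain ⟨h1, h2, h3, h4, h5, h6, x, e, h7, h8, h9, h10, h11⟩ := h
  refine ⟨h1.swap, h3, h2, h5, h4, ?_, x, e, h7.symm, h8, h9, ?_, fun w => res_comm.trans (h11 w)⟩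
  · rwa [linkEdges_comm, linkEdges_comm (P := Q')]
  · rwa [linkEdges_comm]

lemma Rerouted.comm {P' Q' : G.Walk u v} {c d : V} (h : Rerouted P Q P' Q' c d) :
    Rerouted P Q P' Q' d c := by
  obtain ⟨h1, h2, h3, h4, h5, h6, x, e, h7, h8, h9, h10, h11⟩ := h
  exact ⟨h1, h2, h3, fun z hz => (h4 z hz).imp id Or.symm, fun z hz => (h5 z hz).imp id Or.symm,
    h6, x, e, h7, h8.symm, h9, h10, h11⟩

/-- The path `u, x, …` is replaced by `u, d, c, x, …`. -/
lemma reroute [Finite V] (huv : u ≠ v) (hn : ¬ G.Adj u v) (hu4 : (G.neighborSet u).ncard ≤ 4)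
    (h : IsLink P Q) {c d : V} (ne : c ≠ d) (resc : Res G u P.snd Q.snd c)
    (resd : Res G u P.snd Q.snd d) (adj : G.Adj c d) (cP : c ∉ P.support) (cQ : c ∉ Q.support)
    (dP : d ∉ P.support) (dQ : d ∉ Q.support) (hx : G.Adj P.snd c) :
    ∃ P' Q', Rerouted P Q P' Q' c d := by
  have hne := h.snd_ne huv hn
  have hPs := adj_snd_of_ne huv P
  have hQs := adj_snd_of_ne huv Q
  cases P with
  | nil => exact absurd rfl huv
  | @cons _ x _ hux P =>
    rw [Walk.snd_cons] at *
    have hP := h.left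
    rw [Walk.cons_isPath_iff] at hP
    rw [Walk.support_cons, List.mem_cons, not_or] at cP dP
    have hxv : x ≠ v := fun h => hn (h ▸ hux)
    refine ⟨Walk.cons resd.1 (Walk.cons adj.symm (Walk.cons hx.symm P)), Q,
      ⟨?_, h.right, ?_⟩, ?_, rfl, ?_, fun z hz => Or.inl hz, ?_, x, c, Or.inl (by simp),
      Or.inl rfl, hx, ?_, ?_⟩
    · simp only [Walk.cons_isPath_iff, Walk.support_cons, List.mem_cons, not_or]
      exact ⟨⟨⟨hP.1, cP.2⟩, ne.symm, dP.2⟩, resd.1.ne, resc.1.ne, hP.2⟩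
    · intro z hz hz'
      simp only [Walk.support_cons, List.mem_cons] at hz
      rcases hz with rfl | rfl | rfl | hz
      · exact Or.inl rfl
      · exact absurd hz' dQ
      · exact absurd hz' cQ
      · exact h.inter z (by simp [hz]) hz'
    · have hdv : d ≠ v := by
        rintro rfl
        exact hn resd.1
      have hcv : c ≠ v := by
        rintro rfl
        exact hn resc.1
      rw [penultimate_cons_of_ne _ _ hdv, penultimate_cons_of_ne _ _ hcv,
        penultimate_cons_of_ne _ _ hxv, penultimate_cons_of_ne _ _ hxv]
    · intro z hz
      simp only [Walk.support_cons, List.mem_cons] at hz ⊢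
      tauto
    · rintro e (he | he) hue
      · rw [Walk.edges_cons, List.mem_cons] at he
        rcases he with rfl | he
        · simp at hue
        · left
          simp [he]
      · exact Or.inr he
    · left
      simp [Sym2.eq_swap]
    · intro w
      rw [Walk.snd_cons]
      constructor
      · rintro ⟨h1, h2, h3⟩
        have := mem_of_four hu4 hux hQs resc.1 resd.1 hne resc.2.1.symm resd.2.1.symm
          resc.2.2.symm resd.2.2.symm ne h1
        tauto
      · rintro (rfl | rfl)
        · exact ⟨hux, resd.2.1.symm, hne⟩
        · exact ⟨resc.1, ne, resc.2.2⟩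

lemma Alpha.reroute [Finite V] (huv : u ≠ v) (hn : ¬ G.Adj u v)
    (hu4 : (G.neighborSet u).ncard ≤ 4) (h : IsLink P Q) {c d : V} (a : Alpha P Q c d) :
    ∃ P' Q', Rerouted P Q P' Q' c d := by
  rcases a.cross with h' | h' | h' | h'
  · exact _root_.reroute huv hn hu4 h a.ne a.resc a.resd a.adj a.cP a.cQ a.dP a.dQ h'
  · obtain ⟨P', Q', hr⟩ := _root_.reroute huv hn hu4 h a.ne.symm a.resd a.resc a.adj.symm a.dP
      a.dQ a.cP a.cQ h'
    exact ⟨P', Q', hr.comm⟩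
  · obtain ⟨P', Q', hr⟩ := _root_.reroute huv hn hu4 h.swap a.ne (res_comm.mp a.resc)
      (res_comm.mp a.resd) a.adj a.cQ a.cP a.dQ a.dP h'
    exact ⟨Q', P', hr.swap⟩
  · obtain ⟨P', Q', hr⟩ := _root_.reroute huv hn hu4 h.swap a.ne.symm (res_comm.mp a.resd)
      (res_comm.mp a.resc) a.adj.symm a.dQ a.dP a.cQ a.cP h'
    exact ⟨Q', P', hr.comm.swap⟩

lemma goodEnd_of_pair {E : Set (Sym2 V)} {a b x e : V} (h : s(x, e) ∈ E)
    (hr : ∀ w, Res G u a b w ↔ w = x ∨ w = e) : GoodEnd G E u a b := by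
  intro c d hc hd hcd
  rcases (hr c).mp hc with rfl | rfl <;> rcases (hr d).mp hd with rfl | rfl
  · exact absurd rfl hcd.ne
  · exact h
  · rwa [Sym2.eq_swap]
  · exact absurd rfl hcd.ne

/-- At each end of a minimal NB link, the remaining neighbours are nonadjacent or form an
`Alpha` configuration. -/
lemma IsMinNB.strong_or_alpha [Finite V] (huv : u ≠ v) (hn : ¬ G.Adj u v)
    (hu4 : (G.neighborSet u).ncard ≤ 4) (h : IsMinNB P Q) :
    StrongEnd G u P.snd Q.snd ∨ ∃ c d, Alpha P Q c d := by
  by_cases hs : StrongEnd G u P.snd Q.snd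
  · exact Or.inl hs
  right
  unfold StrongEnd at hs
  push Not at hs
  obtain ⟨c, d, hc, hd, hcd⟩ := hs
  have off : ∀ P Q : G.Walk u v, IsMinNB P Q → ∀ c d, Res G u P.snd Q.snd c →
      Res G u P.snd Q.snd d → G.Adj c d → c ∉ P.support := by
    intro P Q h c d hc hd hcd hmem
    exact not_bad_of_adj hu4 hc.1 (adj_snd_of_ne huv Q) hd.1 hc.2.2 hd.2.2 hcd
      (h.bad_of_mem hn hmem hc.1 hc.2.1)
  refine ⟨c, d, hcd.ne, hc, hd, hcd, off P Q h c d hc hd hcd,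
    off Q P h.swap c d (res_comm.mp hc) (res_comm.mp hd) hcd, off P Q h d c hd hc hcd.symm,
    off Q P h.swap d c (res_comm.mp hd) (res_comm.mp hc) hcd.symm, ?_⟩
  by_contra hcr
  simp only [not_or] at hcr
  exact h.1.start ⟨c, d, hcd.ne, hc.1, hd.1, hc.2.1, hc.2.2, hd.2.1, hd.2.2, hcd,
    hcr.1, hcr.2.1, hcr.2.2.1, hcr.2.2.2⟩

/-- A minimal NB link with nonadjacent remaining neighbours at `v` is usable, possibly after
rerouting near `u`. -/
lemma Setup.dec_of_strong [Finite V] (S : Setup G u v) (h : IsMinNB P Q)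
    (hv : StrongEnd G v P.penultimate Q.penultimate)
    (hdiff : StrongEnd G u P.snd Q.snd →
      (∀ w, Res G u P.snd Q.snd w ↔ Res G v P.penultimate Q.penultimate w) →
      ∀ w, ¬ Res G u P.snd Q.snd w) :
    Dec G.edgeSet ((G.support.ncard - 1) / 2) := by
  rcases h.strong_or_alpha S.ne S.nadj S.hu4 with hs | ⟨c, d, a⟩
  · exact S.good_dec h.1.link (fun c d hc hd hcd => absurd hcd (hs c d hc hd))
      (fun c d hc hd hcd => absurd hcd (hv c d hc hd)) (hdiff hs)
  · obtain ⟨P', Q', h1, h2, h3, -, -, -, x, e, -, -, hxe, hmem, hres⟩ :=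
      a.reroute S.ne S.nadj S.hu4 h.1.link
    refine S.good_dec h1 (goodEnd_of_pair hmem hres) ?_ ?_
    · rw [h2, h3]
      exact fun c d hc hd hcd => absurd hcd (hv c d hc hd)
    · intro heq
      rw [h2, h3] at heq
      exact absurd hxe (hv x e ((heq x).mp ((hres x).mpr (Or.inl rfl)))
        ((heq e).mp ((hres e).mpr (Or.inr rfl))))

/-- Disjoint `Alpha` configurations at the two ends allow rerouting at both ends. -/
lemma Setup.dec_of_alpha_alpha [Finite V] (S : Setup G u v) (h : IsLink P Q) {c d c' d' : V}
    (a : Alpha P Q c d) (a' : Alpha P.reverse Q.reverse c' d')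
    (h1 : c ≠ c') (h2 : c ≠ d') (h3 : d ≠ c') (h4 : d ≠ d') :
    Dec G.edgeSet ((G.support.ncard - 1) / 2) := by
  obtain ⟨P₁, Q₁, hl, hp, hq, hsP, hsQ, -, x, e, hx, he, hxe, hmem, hres⟩ :=
    a.reroute S.ne S.nadj S.hu4 h
  have sP : ∀ z, z ∉ P.reverse.support → z ≠ c → z ≠ d → z ∉ P₁.reverse.support := by
    intro z hz hzc hzd hz'
    rw [Walk.support_reverse, List.mem_reverse] at hz hz'
    rcases hsP z hz' with h | h | h
    exacts [hz h, hzc h, hzd h]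
  have sQ : ∀ z, z ∉ Q.reverse.support → z ≠ c → z ≠ d → z ∉ Q₁.reverse.support := by
    intro z hz hzc hzd hz'
    rw [Walk.support_reverse, List.mem_reverse] at hz hz'
    rcases hsQ z hz' with h | h | h
    exacts [hz h, hzc h, hzd h]
  have eP : P₁.reverse.snd = P.reverse.snd := by simpa using hp
  have eQ : Q₁.reverse.snd = Q.reverse.snd := by simpa using hq
  have a'' : Alpha P₁.reverse Q₁.reverse c' d' :=
    ⟨a'.ne, by rw [eP, eQ]; exact a'.resc, by rw [eP, eQ]; exact a'.resd, a'.adj,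
      sP _ a'.cP h1.symm h3.symm, sQ _ a'.cQ h1.symm h3.symm, sP _ a'.dP h2.symm h4.symm,
      sQ _ a'.dQ h2.symm h4.symm, by rw [eP, eQ]; exact a'.cross⟩
  obtain ⟨P₂, Q₂, hl₂, hp₂, hq₂, -, -, hkeep, x', e', hx', he', hxe', hmem', hres'⟩ :=
    a''.reroute S.ne.symm (fun h => S.nadj h.symm) S.hv4 hl.reverse
  rw [Walk.penultimate_reverse] at hp₂ hq₂
  refine S.good_dec (P := P₂.reverse) (Q := Q₂.reverse) hl₂.reverse ?_ ?_ ?_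
  · rw [linkEdges_reverse, Walk.snd_reverse, Walk.snd_reverse, hp₂, hq₂]
    refine goodEnd_of_pair (hkeep _ (by rwa [linkEdges_reverse]) ?_) hres
    rw [Sym2.mem_iff]
    rintro (rfl | rfl)
    · exact S.nadj ((hres _).mpr (Or.inl rfl)).1
    · exact S.nadj ((hres _).mpr (Or.inr rfl)).1
  · rw [linkEdges_reverse, Walk.penultimate_reverse, Walk.penultimate_reverse]
    exact goodEnd_of_pair hmem' hres'
  · intro heq
    rw [Walk.penultimate_reverse, Walk.penultimate_reverse, Walk.snd_reverse, Walk.snd_reverse,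
      hp₂, hq₂] at heq
    exfalso
    have hee : e ≠ e' := by
      rcases he with rfl | rfl <;> rcases he' with rfl | rfl <;> assumption
    have hex : e = x' := ((hres' e).mp ((heq e).mp ((hres e).mpr (Or.inr rfl)))).resolve_right hee
    have heP : e ∉ P.support := by rcases he with rfl | rfl; exacts [a.cP, a.dP]
    have heQ : e ∉ Q.support := by rcases he with rfl | rfl; exacts [a.cQ, a.dQ]
    rw [eP, eQ, Walk.snd_reverse, Walk.snd_reverse, ← hex] at hx'
    rcases hx' with h' | h'
    · exact heP (h' ▸ P.getVert_mem_support _)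
    · exact heQ (h' ▸ Q.getVert_mem_support _)

end good

/-! ### Two vertices with the same four neighbours -/

section same

variable {V : Type*} {G : SimpleGraph V} {u v : V}

/-- The nonadjacent vertices `u` and `v` have the same neighbourhood `{a, b, e, f}` of size `4`. -/
structure Four (G : SimpleGraph V) (u v a b e f : V) : Prop where
  ab : a ≠ b
  ae : a ≠ e
  af : a ≠ f
  be : b ≠ e
  bf : b ≠ f
  ef : e ≠ f
  hu : ∀ w, G.Adj u w ↔ w = a ∨ w = b ∨ w = e ∨ w = f
  hv : ∀ w, G.Adj v w ↔ w = a ∨ w = b ∨ w = e ∨ w = f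

lemma Four.rot {a b e f : V} (h : Four G u v a b e f) : Four G u v b e f a :=
  ⟨h.be, h.bf, h.ab.symm, h.ef, h.ae.symm, h.af.symm, fun w => (h.hu w).trans (by tauto),
    fun w => (h.hv w).trans (by tauto)⟩

lemma Four.swap {a b e f : V} (h : Four G u v a b e f) : Four G u v b a e f :=
  ⟨h.ab.symm, h.be, h.bf, h.ae, h.af, h.ef, fun w => (h.hu w).trans (by tauto),
    fun w => (h.hv w).trans (by tauto)⟩

lemma Four.swap' {a b e f : V} (h : Four G u v a b e f) : Four G u v a b f e :=
  h.rot.rot.swap.rot.rot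

/-- If `u` and `v` have the same neighbours, a path `M` between two of them, together with a
third one `e`, gives a link. -/
lemma Setup.dec_of_path [Finite V] (S : Setup G u v) (hN : ∀ w, G.Adj u w ↔ G.Adj v w)
    {x y e : V} (M : G.Walk x y) (hM : M.IsPath) (hxy : x ≠ y) (hx : G.Adj u x) (hy : G.Adj u y)
    (he : G.Adj u e) (huM : u ∉ M.support) (hvM : v ∉ M.support) (heM : e ∉ M.support)
    (hgu : ∀ c d, Res G u x e c → Res G u x e d → G.Adj c d → s(c, d) ∈ M.edges)
    (hgv : ∀ c d, Res G u y e c → Res G u y e d → G.Adj c d → s(c, d) ∈ M.edges) :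
    Dec G.edgeSet ((G.support.ncard - 1) / 2) := by
  have hyv : G.Adj y v := ((hN y).mp hy).symm
  have hev : G.Adj e v := ((hN e).mp he).symm
  have hp : (Walk.cons hx (M.append (Walk.cons hyv Walk.nil))).penultimate = y := by
    have hxv : x ≠ v := by
      rintro rfl
      exact S.nadj hx
    rw [penultimate_cons_of_ne _ _ hxv, penultimate_append_of _ _ hyv.ne]
    rfl
  have hq : (Walk.cons he (Walk.cons hev Walk.nil)).penultimate = e := rfl
  have hres : ∀ w, Res G v y e w ↔ Res G u y e w := fun w => by
    unfold Res
    rw [hN]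
  refine S.good_dec (P := Walk.cons hx (M.append (Walk.cons hyv Walk.nil)))
    (Q := Walk.cons he (Walk.cons hev Walk.nil)) ⟨?_, ?_, ?_⟩ ?_ ?_ ?_
  · rw [Walk.cons_isPath_iff]
    refine ⟨isPath_append_of hM ?_ ?_, ?_⟩
    · simpa using hyv.ne
    · intro z hz hz'
      simp only [Walk.support_cons, Walk.support_nil, List.mem_cons, List.not_mem_nil,
        or_false] at hz'
      rcases hz' with h | rfl
      · exact h
      · exact absurd hz hvM
    · rw [Walk.mem_support_append_iff]
      rintro (h | h)
      · exact huM h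
      · simp only [Walk.support_cons, Walk.support_nil, List.mem_cons, List.not_mem_nil,
          or_false] at h
        exact h.elim hy.ne S.ne
  · simpa using ⟨hev.ne, he.ne, S.ne⟩
  · intro z hz hz'
    simp only [Walk.support_cons, Walk.support_nil, List.mem_cons, List.not_mem_nil,
      or_false] at hz'
    rcases hz' with h | rfl | h
    · exact Or.inl h
    · rw [Walk.support_cons, List.mem_cons, Walk.mem_support_append_iff] at hz
      rcases hz with h | h | h
      · exact Or.inl h
      · exact absurd h heM
      · simp only [Walk.support_cons, Walk.support_nil, List.mem_cons, List.not_mem_nil,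
          or_false] at h
        rcases h with rfl | h
        · exact absurd M.end_mem_support heM
        · exact Or.inr h
    · exact Or.inr h
  · rw [Walk.snd_cons, Walk.snd_cons]
    intro c d hc hd hcd
    left
    simp [hgu c d hc hd hcd]
  · rw [hp, hq]
    intro c d hc hd hcd
    left
    simp [hgv c d ((hres c).mp hc) ((hres d).mp hd) hcd]
  · rw [hp, hq, Walk.snd_cons, Walk.snd_cons]
    intro heq
    have : Res G v y e y := (heq y).mp ⟨hy, hxy.symm, fun h => heM (h ▸ M.end_mem_support)⟩
    exact absurd rfl this.2.1

lemma Four.same {a b e f : V} (h : Four G u v a b e f) (w : V) : G.Adj u w ↔ G.Adj v w :=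
  (h.hu w).trans (h.hv w).symm

lemma Four.ne_u {a b e f : V} (h : Four G u v a b e f) : u ≠ a ∧ u ≠ b ∧ u ≠ e ∧ u ≠ f := by
  have := h.hu
  refine ⟨?_, ?_, ?_, ?_⟩
  · exact ((this a).mpr (by tauto)).ne
  · exact ((this b).mpr (by tauto)).ne
  · exact ((this e).mpr (by tauto)).ne
  · exact ((this f).mpr (by tauto)).ne

lemma Four.symm {a b e f : V} (h : Four G u v a b e f) : Four G v u a b e f :=
  ⟨h.ab, h.ae, h.af, h.be, h.bf, h.ef, h.hv, h.hu⟩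

lemma Four.ne_v {a b e f : V} (h : Four G u v a b e f) : v ≠ a ∧ v ≠ b ∧ v ≠ e ∧ v ≠ f :=
  h.symm.ne_u

lemma Four.res {a b e f : V} (h : Four G u v a b e f) (w : V) :
    Res G u a e w ↔ w = b ∨ w = f := by
  unfold Res
  rw [h.hu]
  constructor
  · tauto
  · rintro (rfl | rfl)
    · exact ⟨by tauto, h.ab.symm, h.be⟩
    · exact ⟨by tauto, h.af.symm, h.ef.symm⟩

lemma Four.dec_of_path {a b e f : V} [Finite V] (h : Four G u v a b e f) (S : Setup G u v)
    (M : G.Walk a b) (hM : M.IsPath)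
    (huM : u ∉ M.support) (hvM : v ∉ M.support) (heM : e ∉ M.support)
    (hbf : G.Adj b f → s(b, f) ∈ M.edges) (haf : G.Adj a f → s(a, f) ∈ M.edges) :
    Dec G.edgeSet ((G.support.ncard - 1) / 2) := by
  have key : ∀ {x y : V}, (G.Adj x y → s(x, y) ∈ M.edges) → ∀ c d, c = x ∨ c = y → d = x ∨ d = y →
      G.Adj c d → s(c, d) ∈ M.edges := by
    intro x y hxy c d hc hd hcd
    rcases hc with rfl | rfl <;> rcases hd with rfl | rfl
    · exact absurd rfl hcd.ne
    · exact hxy hcd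
    · rw [Sym2.eq_swap]
      exact hxy hcd.symm
    · exact absurd rfl hcd.ne
  refine S.dec_of_path h.same M hM h.ab ((h.hu a).mpr (by tauto)) ((h.hu b).mpr (by tauto))
    ((h.hu e).mpr (by tauto)) huM hvM heM ?_ ?_
  · intro c d hc hd
    exact key hbf c d ((h.res c).mp hc) ((h.res d).mp hd)
  · intro c d hc hd
    exact key haf c d ((h.swap.res c).mp hc) ((h.swap.res d).mp hd)

/-- Three consecutive vertices inside the common neighbourhood. -/
lemma Four.dec_of_two_edges {a b e f : V} [Finite V] (h : Four G u v a b e f) (S : Setup G u v)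
    (h1 : G.Adj a f) (h2 : G.Adj f b) : Dec G.edgeSet ((G.support.ncard - 1) / 2) := by
  have hu := h.ne_u
  have hv := h.ne_v
  refine h.dec_of_path S (Walk.cons h1 (Walk.cons h2 Walk.nil)) ?_ ?_ ?_ ?_ ?_ ?_
  · simpa using ⟨h2.ne, h1.ne, h.ab⟩
  · simpa using ⟨hu.1, hu.2.2.2, hu.2.1⟩
  · simpa using ⟨hv.1, hv.2.2.2, hv.2.1⟩
  · simpa using ⟨h.ae.symm, h.ef, h.be.symm⟩
  · intro _
    simp
  · intro _
    simp

/-- `a` is adjacent to `u` and `v` only, and `b, f` are nonadjacent. -/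
lemma Four.dec_of_deg_two {a b e f : V} [Finite V] (h : Four G u v a b e f) (S : Setup G u v)
    (ha : ∀ w, G.Adj a w → w = u ∨ w = v) (hbf : ¬ G.Adj b f) :
    Dec G.edgeSet ((G.support.ncard - 1) / 2) := by
  have hua : G.Adj u a := (h.hu a).mpr (by tauto)
  have hva : G.Adj v a := (h.hv a).mpr (by tauto)
  have hue : G.Adj u e := (h.hu e).mpr (by tauto)
  have hve : G.Adj v e := (h.hv e).mpr (by tauto)
  have hl : IsLink (Walk.cons hua (Walk.cons hva.symm Walk.nil))
      (Walk.cons hue (Walk.cons hve.symm Walk.nil)) := by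
    refine ⟨?_, ?_, ?_⟩
    · simpa using ⟨hva.ne', hua.ne, S.ne⟩
    · simpa using ⟨hve.ne', hue.ne, S.ne⟩
    · intro z hz hz'
      simp only [Walk.support_cons, Walk.support_nil, List.mem_cons, List.not_mem_nil,
        or_false] at hz hz'
      have := h.ae
      rcases hz with h | rfl | h
      · exact Or.inl h
      · tauto
      · exact Or.inr h
  have hF := hl.isCyc S.ne S.nadj
  have hFG := linkEdges_subset (P := Walk.cons hua (Walk.cons hva.symm Walk.nil))
    (Q := Walk.cons hue (Walk.cons hve.symm Walk.nil))
  have hU := hl.adj_start S.ne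
  have hiso : ∀ w, ¬ (G.deleteEdges (linkEdges (Walk.cons hua (Walk.cons hva.symm Walk.nil))
      (Walk.cons hue (Walk.cons hve.symm Walk.nil)))).Adj a w := by
    intro w hw
    rw [deleteEdges_adj] at hw
    apply hw.2
    left
    rcases ha w hw.1 with rfl | rfl
    · simp [Sym2.eq_swap]
    · simp
  refine reduce S.planar S.even S.ih hF hFG hua.ne' ⟨u, hua.symm⟩ S.hu (hiso u) (Or.inl hiso)
    (supprable_of_good S.even hF hFG hua hue h.ae S.hu4 hU ?_) (Or.inl hiso)
  intro c d hc hd hcd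
  exfalso
  rcases (h.res c).mp hc with rfl | rfl <;> rcases (h.res d).mp hd with rfl | rfl
  · exact hcd.ne rfl
  · exact hbf hcd
  · exact hbf hcd.symm
  · exact hcd.ne rfl

/-- A path between `a` and `b` off the rest of the configuration exists, and no vertex of the
common neighbourhood has two neighbours in it. -/
lemma Four.dec_of_matching {a b e f : V} [Finite V] (h : Four G u v a b e f) (S : Setup G u v)
    (hone : ∀ x y z, G.Adj u x → G.Adj u y → G.Adj u z → G.Adj x y → G.Adj y z → x = z)
    (M : G.Walk a b) (hM : M.IsPath)
    (huM : u ∉ M.support) (hvM : v ∉ M.support) (heM : e ∉ M.support) (hfM : f ∉ M.support) :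
    Dec G.edgeSet ((G.support.ncard - 1) / 2) := by
  have hua : G.Adj u a := (h.hu a).mpr (by tauto)
  have hub : G.Adj u b := (h.hu b).mpr (by tauto)
  have hue : G.Adj u e := (h.hu e).mpr (by tauto)
  have huf : G.Adj u f := (h.hu f).mpr (by tauto)
  have key : ∀ {e f : V}, Four G u v a b e f → e ∉ M.support → f ∉ M.support → G.Adj f a →
      Dec G.edgeSet ((G.support.ncard - 1) / 2) := by
    intro e f h heM hfM hfa
    have huf : G.Adj u f := (h.hu f).mpr (by tauto)
    have hu := h.ne_u
    have hv := h.ne_v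
    -- the roles of `a` and `f` are exchanged
    have h' : Four G u v f b e a := h.rot.rot.rot.swap.rot
    refine h'.dec_of_path S (Walk.cons hfa M) ?_ ?_ ?_ ?_ ?_ ?_
    · rw [Walk.cons_isPath_iff]
      exact ⟨hM, hfM⟩
    · simpa using ⟨hu.2.2.2, huM⟩
    · simpa using ⟨hv.2.2.2, hvM⟩
    · simpa using ⟨h.ef, heM⟩
    · intro hba
      exact absurd (hone b a f hub hua huf hba hfa.symm) h.bf
    · intro _
      simp
  by_cases hfa : G.Adj f a
  · exact key h heM hfM hfa
  by_cases hea : G.Adj e a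
  · exact key h.swap' hfM heM hea
  by_cases hfb : G.Adj b f
  · refine h.swap'.dec_of_path S M hM huM hvM hfM ?_ (fun h' => absurd h'.symm hea)
    intro hbe
    exact absurd (hone e b f hue hub huf hbe.symm hfb) h.ef
  · exact h.dec_of_path S M hM huM hvM heM (fun h' => absurd h' hfb) (fun h' => absurd h'.symm hfa)

lemma Four.exists_first {a b e f x : V} (h : Four G u v a b e f) (hx : G.Adj u x) :
    ∃ b e f, Four G u v x b e f := by
  rcases (h.hu x).mp hx with rfl | rfl | rfl | rfl
  · exact ⟨_, _, _, h⟩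
  · exact ⟨_, _, _, h.rot⟩
  · exact ⟨_, _, _, h.rot.rot⟩
  · exact ⟨_, _, _, h.rot.rot.rot⟩

lemma Four.exists_second {a b e f x : V} (h : Four G u v a b e f) (hx : G.Adj u x)
    (hxa : x ≠ a) : ∃ e f, Four G u v a x e f := by
  rcases (h.hu x).mp hx with rfl | rfl | rfl | rfl
  · exact absurd rfl hxa
  · exact ⟨_, _, h⟩
  · exact ⟨_, _, h.rot.swap.rot.rot.rot⟩
  · exact ⟨_, _, h.rot.rot.rot.swap⟩

lemma Four.exists_third {a b e f x : V} (h : Four G u v a b e f) (hx : G.Adj u x)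
    (hxa : x ≠ a) (hxb : x ≠ b) : ∃ f, Four G u v a b x f := by
  rcases (h.hu x).mp hx with rfl | rfl | rfl | rfl
  · exact absurd rfl hxa
  · exact absurd rfl hxb
  · exact ⟨_, h⟩
  · exact ⟨_, h.swap'⟩

/-- The case of two nonadjacent vertices with the same four neighbours. -/
lemma Four.dec {a b e f : V} [Finite V] (h : Four G u v a b e f) (S : Setup G u v) :
    Dec G.edgeSet ((G.support.ncard - 1) / 2) := by
  by_cases hone : ∀ x y z, G.Adj u x → G.Adj u y → G.Adj u z → G.Adj x y → G.Adj y z → x = z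
  swap
  · push Not at hone
    obtain ⟨x, y, z, hx, hy, hz, hxy, hyz, hxz⟩ := hone
    obtain ⟨_, _, _, h1⟩ := h.exists_first hx
    obtain ⟨_, _, h2⟩ := h1.exists_second hz hxz.symm
    obtain ⟨_, hw⟩ := h2.exists_third hy hxy.ne' hyz.ne
    exact hw.swap'.dec_of_two_edges S hxy hyz
  by_cases ha : ∀ w, G.Adj a w → w = u ∨ w = v
  · by_cases hbf : G.Adj b f
    · refine h.swap'.dec_of_deg_two S ha fun hbe => h.ef ?_
      refine hone e b f ?_ ?_ ?_ hbe.symm hbf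
      all_goals
        rw [h.hu]
        tauto
    · exact h.dec_of_deg_two S ha hbf
  push Not at ha
  obtain ⟨y, hay, hyu, hyv⟩ := ha
  have hua : G.Adj u a := (h.hu a).mpr (by tauto)
  have hub : G.Adj u b := (h.hu b).mpr (by tauto)
  obtain ⟨r, hr⟩ := S.conn a y b ⟨a, hay.symm⟩ ⟨u, hub.symm⟩ hay.ne' h.ab.symm
  obtain ⟨z, hz, q, hq, hqr, hqS⟩ := first_hit r {w | G.Adj u w ∨ w = u ∨ w = v} (Or.inl hub)
  have hzu : z ≠ u := by
    rintro rfl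
    have hadj := adj_pen_of_ne hyu q
    exact hadj.ne (hqS _ (q.getVert_mem_support _) (Or.inl hadj)).symm
  have hzv : z ≠ v := by
    rintro rfl
    have hadj := adj_pen_of_ne hyv q
    exact hadj.ne (hqS _ (q.getVert_mem_support _) (Or.inl ((h.same _).mpr hadj))).symm
  have hza : z ≠ a := by
    rintro rfl
    exact hr (hqr _ q.end_mem_support)
  have huz : G.Adj u z := by
    rcases hz with h | h | h
    exacts [h, absurd h hzu, absurd h hzv]
  have haq : a ∉ q.support := fun h => hr (hqr _ h)
  have hM : (Walk.cons hay q).IsPath := by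
    rw [Walk.cons_isPath_iff]
    exact ⟨hq, haq⟩
  have off : ∀ w, (G.Adj u w ∨ w = u ∨ w = v) → w ≠ a → w ≠ z →
      w ∉ (Walk.cons hay q).support := by
    intro w hw hwa hwz
    rw [Walk.support_cons, List.mem_cons]
    rintro (h | h)
    · exact hwa h
    · exact hwz (hqS _ h hw)
  have fin : ∀ e f, Four G u v a z e f → Dec G.edgeSet ((G.support.ncard - 1) / 2) := by
    intro e f h
    refine h.dec_of_matching S hone (Walk.cons hay q) hM ?_ ?_ ?_ ?_
    · exact off _ (Or.inr (Or.inl rfl)) h.ne_u.1 hzu.symm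
    · exact off _ (Or.inr (Or.inr rfl)) h.ne_v.1 hzv.symm
    · exact off _ (Or.inl ((h.hu _).mpr (by tauto))) h.ae.symm h.be.symm
    · exact off _ (Or.inl ((h.hu _).mpr (by tauto))) h.af.symm h.bf.symm
  obtain ⟨e, f, h'⟩ := h.exists_second huz hza
  exact fin e f h'

end same

/-! ### Conclusion -/

section final

variable {V : Type*} {G : SimpleGraph V} {u v : V} {P Q : G.Walk u v}

/-- The path `u, t, v`. -/
def via {t : V} (h : G.Adj u t) (h' : G.Adj v t) : G.Walk u v :=
  Walk.cons h (Walk.cons h'.symm Walk.nil)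

lemma via_snd {t : V} (h : G.Adj u t) (h' : G.Adj v t) : (via h h').snd = t := Walk.snd_cons _ _

lemma via_pen {t : V} (h : G.Adj u t) (h' : G.Adj v t) : (via h h').penultimate = t := rfl

lemma via_length {t : V} (h : G.Adj u t) (h' : G.Adj v t) : (via h h').length = 2 := rfl

lemma mem_via {t z : V} (h : G.Adj u t) (h' : G.Adj v t) :
    z ∈ (via h h').support ↔ z = u ∨ z = t ∨ z = v := by
  simp [via]

lemma via_isPath {t : V} (huv : u ≠ v) (h : G.Adj u t) (h' : G.Adj v t) :
    (via h h').IsPath := by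
  unfold via
  simpa using ⟨h'.ne', h.ne, huv⟩

lemma via_link {t : V} (huv : u ≠ v) (h : G.Adj u t) (h' : G.Adj v t) (hQ : Q.IsPath)
    (ht : t ∉ Q.support) : IsLink (via h h') Q := by
  refine ⟨via_isPath huv h h', hQ, ?_⟩
  intro z hz hz'
  rcases (mem_via h h').mp hz with h | rfl | h
  exacts [Or.inl h, absurd hz' ht, Or.inr h]

lemma of_length_two (h : P.length = 2) :
    P.snd = P.penultimate ∧ ∀ z ∈ P.support, z = u ∨ z = P.snd ∨ z = v := by
  cases P with
  | nil => simp at h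
  | cons h1 p =>
    cases p with
    | nil => simp at h
    | cons h2 p =>
      cases p with
      | nil => exact ⟨by simp, by simp⟩
      | cons h3 p => simp at h

lemma bad_of_short (h : IsMinNB P Q) {P' Q' : G.Walk u v} (hl : IsLink P' Q')
    (hlen : P'.length + Q'.length < P.length + Q.length) :
    Bad G u P'.snd Q'.snd ∨ Bad G v P'.penultimate Q'.penultimate := by
  by_contra hcon
  rw [not_or] at hcon
  have := h.2 P' Q' ⟨hl, hcon.1, hcon.2⟩
  omega

/-- `t` is a remaining neighbour of both ends of the link. -/
def Common (P Q : G.Walk u v) (t : V) : Prop :=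
  Res G u P.snd Q.snd t ∧ Res G v P.penultimate Q.penultimate t

lemma Common.swap {t : V} (h : Common P Q t) : Common Q P t :=
  ⟨res_comm.mp h.1, res_comm.mp h.2⟩

/-- The link formed by `u, t₁, v` and `u, t₂, v` has total length `4`, so it is bad at one end if
the minimal NB link is longer. -/
lemma common_bad (S : Setup G u v) (h : IsMinNB P Q) {t₁ t₂ : V} (c₁ : Common P Q t₁)
    (c₂ : Common P Q t₂) (hne : t₁ ≠ t₂) (hlen : 4 < P.length + Q.length) :
    Bad G u t₁ t₂ ∨ Bad G v t₁ t₂ := by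
  have hl : IsLink (via c₁.1.1 c₁.2.1) (via c₂.1.1 c₂.2.1) := by
    refine via_link S.ne _ _ (via_isPath S.ne _ _) ?_
    rw [mem_via]
    rintro (h | h | h)
    exacts [c₁.1.1.ne h.symm, hne h, c₁.2.1.ne h.symm]
  have := bad_of_short h hl (by rw [via_length, via_length]; exact hlen)
  rwa [via_snd, via_snd, via_pen, via_pen] at this

lemma Common.off [Finite V] (S : Setup G u v) (h : IsMinNB P Q) {t₁ t₂ : V}
    (c₁ : Common P Q t₁) (c₂ : Common P Q t₂) (hne : t₁ ≠ t₂) : t₁ ∉ P.support := by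
  intro hm
  have b1 : Bad G u t₁ Q.snd := h.bad_of_mem S.nadj hm c₁.1.1 c₁.1.2.1
  have b2 : Bad G v t₁ Q.penultimate := by
    have := h.reverse.bad_of_mem (fun h => S.nadj h.symm) (c := t₁) (by simpa using hm) c₁.2.1
      (by simpa using c₁.2.2.1)
    simpa using this
  have hQ := two_le_length S.ne S.nadj Q
  have hP := two_le_length S.ne S.nadj P
  have hP3 : P.length ≠ 2 := by
    intro h2
    rcases (of_length_two h2).2 _ hm with h | h | h
    · exact c₁.1.1.ne h.symm
    · exact c₁.1.2.1 h
    · exact c₁.2.1.ne h.symm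
  rcases common_bad S h c₁ c₂ hne (by omega) with hb | hb
  · exact c₂.1.2.2 (bad_unique S.hu4 c₁.1.1 c₂.1.1 (adj_snd_of_ne S.ne Q) hne c₁.1.2.2 hb b1)
  · exact c₂.2.2.2 (bad_unique S.hv4 c₁.2.1 c₂.2.1 (adj_pen_of_ne S.ne Q) hne c₁.2.2.2 hb b2)

/-- Otherwise `Q.length > 2`, and each pair among `u, t₁, v`, `u, t₂, v` and `P` would be
a shorter link, hence bad at one end; two of them are bad at the same end, although they share a path. -/
lemma Common.length [Finite V] (S : Setup G u v) (h : IsMinNB P Q) {t₁ t₂ : V}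
    (c₁ : Common P Q t₁) (c₂ : Common P Q t₂) (hne : t₁ ≠ t₂) : Q.length = 2 := by
  by_contra hQ3
  have hQ := two_le_length S.ne S.nadj Q
  have hP := two_le_length S.ne S.nadj P
  have b12 := common_bad S h c₁ c₂ hne (by omega)
  have b : ∀ {t t' : V}, Common P Q t → Common P Q t' → t ≠ t' →
      Bad G u t P.snd ∨ Bad G v t P.penultimate := by
    intro t t' c c' hne
    have := bad_of_short h (via_link S.ne c.1.1 c.2.1 h.1.link.left (c.off S h c' hne))
      (by rw [via_length]; omega)
    rwa [via_snd, via_pen] at this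
  have aPu := adj_snd_of_ne S.ne P
  have aPv := adj_pen_of_ne S.ne P
  rcases b c₁ c₂ hne with b1 | b1 <;> rcases b c₂ c₁ hne.symm with b2 | b2
  · exact hne (bad_unique S.hu4 aPu c₁.1.1 c₂.1.1 c₁.1.2.1.symm c₂.1.2.1.symm b1.swap b2.swap)
  · rcases b12 with b3 | b3
    · exact c₂.1.2.1 (bad_unique S.hu4 c₁.1.1 c₂.1.1 aPu hne c₁.1.2.1 b3 b1)
    · exact c₁.2.2.1 (bad_unique S.hv4 c₂.2.1 c₁.2.1 aPv hne.symm c₂.2.2.1 b3.swap b2)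
  · rcases b12 with b3 | b3
    · exact c₁.1.2.1 (bad_unique S.hu4 c₂.1.1 c₁.1.1 aPu hne.symm c₂.1.2.1 b3.swap b2)
    · exact c₂.2.2.1 (bad_unique S.hv4 c₁.2.1 c₂.2.1 aPv hne c₁.2.2.1 b3 b1)
  · exact hne (bad_unique S.hv4 aPv c₁.2.1 c₂.2.1 c₁.2.2.1.symm c₂.2.2.1.symm b1.swap b2.swap)

/-- Both paths of the link have length `2` and the remaining neighbours are common. -/
lemma Common.dec [Finite V] (S : Setup G u v) (h : IsLink P Q) {t₁ t₂ : V}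
    (c₁ : Common P Q t₁) (c₂ : Common P Q t₂) (hne : t₁ ≠ t₂) (hP : P.length = 2)
    (hQ : Q.length = 2) : Dec G.edgeSet ((G.support.ncard - 1) / 2) := by
  have hP := (of_length_two hP).1
  have hQ := (of_length_two hQ).1
  have hs := h.snd_ne S.ne S.nadj
  have hu1 := adj_snd_of_ne S.ne P
  have hu2 := adj_snd_of_ne S.ne Q
  have hv1 := hP ▸ adj_pen_of_ne S.ne P
  have hv2 := hQ ▸ adj_pen_of_ne S.ne Q
  obtain ⟨r₁, r₁'⟩ := c₁
  obtain ⟨r₂, r₂'⟩ := c₂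
  have F : Four G u v P.snd Q.snd t₁ t₂ := by
    refine ⟨hs, r₁.2.1.symm, r₂.2.1.symm, r₁.2.2.symm, r₂.2.2.symm, hne, ?_, ?_⟩
    · intro w
      constructor
      · exact mem_of_four S.hu4 hu1 hu2 r₁.1 r₂.1 hs r₁.2.1.symm r₂.2.1.symm r₁.2.2.symm
          r₂.2.2.symm hne
      · rintro (rfl | rfl | rfl | rfl)
        exacts [hu1, hu2, r₁.1, r₂.1]
    · intro w
      constructor
      · exact mem_of_four S.hv4 hv1 hv2 r₁'.1 r₂'.1 hs r₁.2.1.symm r₂.2.1.symm r₁.2.2.symm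
          r₂.2.2.symm hne
      · rintro (rfl | rfl | rfl | rfl)
        exacts [hv1, hv2, r₁'.1, r₂'.1]
  exact F.dec S

lemma Setup.exists_res [Finite V] (S : Setup G u v) {a b t : V} (ha : G.Adj u a) (hb : G.Adj u b)
    (hab : a ≠ b) (ht : Res G u a b t) : ∃ t', t ≠ t' ∧ Res G u a b t' := by
  by_contra hcon
  push Not at hcon
  have hN : G.neighborSet u = {a, b, t} := by
    ext w
    constructor
    · intro hw
      by_contra hw'
      simp only [Set.mem_insert_iff, Set.mem_singleton_iff, not_or] at hw'
      exact hcon w (Ne.symm hw'.2.2) ⟨hw, hw'.1, hw'.2.1⟩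
    · rintro (rfl | rfl | rfl)
      exacts [ha, hb, ht.1]
  have h3 := S.even u
  rw [hN, Set.ncard_insert_of_notMem (by simp [hab, ht.2.1.symm]),
    Set.ncard_pair ht.2.2.symm] at h3
  exact absurd h3 (by decide)

lemma Setup.dec_of_same_res [Finite V] (S : Setup G u v) (h : IsMinNB P Q)
    (heq : ∀ w, Res G u P.snd Q.snd w ↔ Res G v P.penultimate Q.penultimate w) {t : V}
    (ht : Res G u P.snd Q.snd t) : Dec G.edgeSet ((G.support.ncard - 1) / 2) := by
  obtain ⟨t', hne, ht'⟩ := S.exists_res (adj_snd_of_ne S.ne P) (adj_snd_of_ne S.ne Q)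
    (h.1.link.snd_ne S.ne S.nadj) ht
  have c : Common P Q t := ⟨ht, (heq t).mp ht⟩
  have c' : Common P Q t' := ⟨ht', (heq t').mp ht'⟩
  exact c.dec S h.1.link c' hne (c.swap.length S h.swap c'.swap hne) (c.length S h c' hne)

lemma Alpha.swap {c d : V} (a : Alpha P Q c d) : Alpha Q P c d :=
  ⟨a.ne, res_comm.mp a.resc, res_comm.mp a.resd, a.adj, a.cQ, a.cP, a.dQ, a.dP, by
    have := a.cross
    tauto⟩

lemma Alpha.comm {c d : V} (a : Alpha P Q c d) : Alpha P Q d c :=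
  ⟨a.ne.symm, a.resd, a.resc, a.adj.symm, a.dP, a.dQ, a.cP, a.cQ, by
    have := a.cross
    tauto⟩

/-- If `Alpha` configurations at both ends share `t`, then `u, t, v` may replace `P`. -/
lemma share_nb [Finite V] (S : Setup G u v) (h : IsLink P Q) {t d d' : V}
    (a : Alpha P Q t d) (a' : Alpha P.reverse Q.reverse t d') :
    IsNB (via a.resc.1 a'.resc.1) Q := by
  refine ⟨via_link S.ne _ _ h.right a.cQ, ?_, ?_⟩
  · rw [via_snd]
    exact not_bad_of_adj S.hu4 a.resc.1 (adj_snd_of_ne S.ne Q) a.resd.1 a.resc.2.2 a.resd.2.2 a.adj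
  · rw [via_pen]
    have h1 := a'.resc.2.2
    have h2 := a'.resd.2.2
    rw [Walk.snd_reverse] at h1 h2
    exact not_bad_of_adj S.hv4 a'.resc.1 (adj_pen_of_ne S.ne Q) a'.resd.1 h1 h2 a'.adj

lemma share_length [Finite V] (S : Setup G u v) (h : IsMinNB P Q) {t d d' : V}
    (a : Alpha P Q t d) (a' : Alpha P.reverse Q.reverse t d') : P.length = 2 := by
  have h1 := h.2 _ _ (share_nb S h.1.link a a')
  have h2 := two_le_length S.ne S.nadj P
  rw [via_length] at h1
  omega

/-- Replacing `P` by `u, t, v` leaves `P.snd` and `d'` at `v`; if these are nonadjacent, the new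
link can be used. -/
lemma Setup.dec_of_share_aux [Finite V] (S : Setup G u v) (h : IsMinNB P Q) {t d d' : V}
    (a : Alpha P Q t d) (a' : Alpha P.reverse Q.reverse t d') (hdd : d ≠ d')
    (hna : ¬ G.Adj P.snd d') : Dec G.edgeSet ((G.support.ncard - 1) / 2) := by
  have hP := share_length S h a a'
  have hPs := (of_length_two hP).1
  have hmin : IsMinNB (via a.resc.1 a'.resc.1) Q := by
    refine ⟨share_nb S h.1.link a a', fun P' Q' h' => ?_⟩
    have := h.2 P' Q' h'
    rw [via_length]
    omega
  have h1 := a'.resc.2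
  have h2 := a'.resd.2
  rw [Walk.snd_reverse, Walk.snd_reverse, ← hPs] at h1 h2
  have hPv := adj_pen_of_ne S.ne P
  rw [← hPs] at hPv
  have hpne := h.1.link.pen_ne S.ne S.nadj
  rw [← hPs] at hpne
  have hres : ∀ w, Res G v (via a.resc.1 a'.resc.1).penultimate Q.penultimate w →
      w = P.snd ∨ w = d' := by
    rw [via_pen]
    intro w hw
    have := mem_of_four S.hv4 hPv (adj_pen_of_ne S.ne Q) a'.resc.1 a'.resd.1 hpne h1.1.symm
      h2.1.symm h1.2.symm h2.2.symm a'.ne hw.1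
    have := hw.2
    tauto
  refine S.dec_of_strong hmin ?_ ?_
  · intro x y hx hy hxy
    rcases hres x hx with rfl | rfl <;> rcases hres y hy with rfl | rfl
    · exact hxy.ne rfl
    · exact hna hxy
    · exact hna hxy.symm
    · exact hxy.ne rfl
  · intro _ heq
    exfalso
    have hd : Res G u (via a.resc.1 a'.resc.1).snd Q.snd d := by
      rw [via_snd]
      exact ⟨a.resd.1, a.ne.symm, a.resd.2.2⟩
    exact (hres d ((heq d).mp hd)).elim a.resd.2.1 hdd

lemma Setup.dec_of_share [Finite V] (S : Setup G u v) (h : IsMinNB P Q) {t d d' : V}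
    (a : Alpha P Q t d) (a' : Alpha P.reverse Q.reverse t d') :
    Dec G.edgeSet ((G.support.ncard - 1) / 2) := by
  have hP := share_length S h a a'
  have hQ := share_length S h.swap a.swap a'.swap
  have hPs := (of_length_two hP).1
  have hQs := (of_length_two hQ).1
  by_cases hdd : d = d'
  · subst hdd
    have c : Common P Q t := ⟨a.resc, by simpa using a'.resc⟩
    exact c.dec S h.1.link ⟨a.resd, by simpa using a'.resd⟩ a.ne hP hQ
  by_cases h1 : G.Adj P.snd d'
  swap
  · exact S.dec_of_share_aux h a a' hdd h1
  by_cases h2 : G.Adj Q.snd d'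
  swap
  · exact S.dec_of_share_aux h.swap a.swap a'.swap hdd h2
  -- `t, P.snd, Q.snd` on one side and `u, v, d'` on the other form a `K₃,₃`
  exfalso
  have hdu : u ≠ d' := by
    rintro rfl
    exact S.nadj a'.resd.1.symm
  have hl := h.1.link.snd_ne S.ne S.nadj
  have hPv := adj_pen_of_ne S.ne P
  have hQv := adj_pen_of_ne S.ne Q
  rw [← hPs] at hPv
  rw [← hQs] at hQv
  refine S.planar.no_K33 ![t, P.snd, Q.snd] ![u, v, d'] ?_ ?_ ?_
  · have n1 := a.resc.2.1
    have n2 := a.resc.2.2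
    intro i j hij
    fin_cases i <;> fin_cases j <;> simp_all
  · have n1 := S.ne
    have n2 := a'.resd.1.ne
    intro i j hij
    fin_cases i <;> fin_cases j <;> simp_all
  · have e1 := a.resc.1.symm
    have e2 := a'.resc.1.symm
    have e3 := a'.adj
    have e4 := (adj_snd_of_ne S.ne P).symm
    have e5 := (adj_snd_of_ne S.ne Q).symm
    have e6 := hPv.symm
    have e7 := hQv.symm
    intro i j
    fin_cases i <;> fin_cases j <;> assumption

lemma Setup.dec [Finite V] (S : Setup G u v) : Dec G.edgeSet ((G.support.ncard - 1) / 2) := by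
  obtain ⟨P, Q, h⟩ := exists_min (exists_nb S.conn S.ne S.nadj S.hu S.hv S.hu4 S.hv4)
  by_cases hsame : (∀ w, Res G u P.snd Q.snd w ↔ Res G v P.penultimate Q.penultimate w) ∧
      ∃ t, Res G u P.snd Q.snd t
  · obtain ⟨heq, t, ht⟩ := hsame
    exact S.dec_of_same_res h heq ht
  rcases h.reverse.strong_or_alpha S.ne.symm S.symm.nadj S.hv4 with hv | ⟨c', d', a'⟩
  · rw [Walk.snd_reverse, Walk.snd_reverse] at hv
    exact S.dec_of_strong h hv fun _ heq w hw => hsame ⟨heq, w, hw⟩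
  rcases h.strong_or_alpha S.ne S.nadj S.hu4 with hu | ⟨c, d, a⟩
  · refine S.symm.dec_of_strong h.reverse (by simpa using hu) fun _ heq w hw => hsame ⟨?_, w, ?_⟩
    · simpa using fun w => (heq w).symm
    · simpa using (heq w).mp hw
  by_cases h1 : c = c'
  · subst h1
    exact S.dec_of_share h a a'
  by_cases h2 : c = d'
  · subst h2
    exact S.dec_of_share h a a'.comm
  by_cases h3 : d = c'
  · subst h3
    exact S.dec_of_share h a.comm a'
  by_cases h4 : d = d'
  · subst h4
    exact S.dec_of_share h a.comm a'.comm
  exact S.dec_of_alpha_alpha h.1.link a a' h1 h2 h3 h4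

/-- A triangle whose vertices have degree `2` is removed. -/
lemma dec_of_triangle [Finite V] (hp : IsPlanar G) (he : ∀ v, Even (G.neighborSet v).ncard)
    (ih : HypBelow V G.support.ncard) {a b c : V} (hab : G.Adj a b) (hbc : G.Adj b c)
    (hac : G.Adj a c) (ha : (G.neighborSet a).ncard = 2) (hb : (G.neighborSet b).ncard = 2) :
    Dec G.edgeSet ((G.support.ncard - 1) / 2) := by
  have nbr : ∀ {x y z : V}, (G.neighborSet x).ncard = 2 → G.Adj x y → G.Adj x z → y ≠ z →
      ∀ w, G.Adj x w → w = y ∨ w = z := by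
    intro x y z h2 hy hz hyz w hw
    have hsub : ({y, z} : Set V) ⊆ G.neighborSet x := by
      rintro t (rfl | rfl) <;> assumption
    have := Set.eq_of_subset_of_ncard_le hsub (by rw [Set.ncard_pair hyz, h2]) (Set.toFinite _)
    have hw' : w ∈ G.neighborSet x := hw
    rw [← this] at hw'
    exact hw'
  have hcyc : (Walk.cons hab (Walk.cons hbc (Walk.cons hac.symm Walk.nil))).IsCycle := by
    rw [Walk.cons_isCycle_iff]
    simp [hab.ne, hbc.ne, hac.ne, hab.ne', hac.ne']
  have hF : IsCyc ({s(a, b), s(b, c), s(a, c)} : Set (Sym2 V)) := by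
    refine ⟨a, _, hcyc.mapLe le_top, ?_⟩
    ext e
    simp [Sym2.eq_swap (a := c)]
  have hFG : ({s(a, b), s(b, c), s(a, c)} : Set (Sym2 V)) ⊆ G.edgeSet := by
    rintro e (rfl | rfl | rfl) <;> assumption
  have ia : ∀ w, ¬ (G.deleteEdges {s(a, b), s(b, c), s(a, c)}).Adj a w := by
    intro w hw
    rw [deleteEdges_adj] at hw
    apply hw.2
    rcases nbr ha hab hac hbc.ne w hw.1 with rfl | rfl <;> simp
  have ib : ∀ w, ¬ (G.deleteEdges {s(a, b), s(b, c), s(a, c)}).Adj b w := by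
    intro w hw
    rw [deleteEdges_adj] at hw
    apply hw.2
    rcases nbr hb hab.symm hbc hac.ne w hw.1 with rfl | rfl <;> simp [Sym2.eq_swap]
  exact reduce hp he ih hF hFG hab.ne ⟨b, hab⟩ ⟨a, hab.symm⟩ (ia b) (Or.inl ia) (Or.inl ib)
    (Or.inl ia)

/-- The theorem with the number of non-isolated vertices in place of `n`. -/
lemma hypBelow [Finite V] (s : ℕ) : HypBelow V s := by
  induction s with
  | zero => exact fun H _ _ h => absurd h (Nat.not_lt_zero _)
  | succ s ih =>
    intro G hp he hs
    have ih' : HypBelow V G.support.ncard := fun H h1 h2 h3 => ih H h1 h2 (by omega)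
    by_cases hne : ∃ a b, G.Adj a b
    swap
    · push Not at hne
      have : G.edgeSet = ∅ := by
        rw [edgeSet_eq_empty]
        ext a b
        simp [hne a b]
      rw [this]
      exact Dec.nil _
    by_cases hc : Conn2 G
    swap
    · exact dec_of_not_conn2 hp he ih' hc
    rcases exists_low G hp he hne with
      ⟨u, v, h1, h2, h3, h4, h5, h6⟩ | ⟨a, b, c, h1, h2, h3, h4, h5, -⟩
    · exact Setup.dec ⟨hp, he, ih', hc, h1, h2, h3, h4, h5, h6⟩
    · exact dec_of_triangle hp he ih' h1 h2 h3 h4 h5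

end final

/-- If `G` is a simple planar even graph on `n` vertices, then `E(G)` can be
partitioned into at most `⌊(n-1)/2⌋` cycles. -/
theorem statement_0 {V : Type*} [Fintype V] (G : SimpleGraph V)
    (hplanar : IsPlanar G)
    (heven : ∀ v : V, Even (G.neighborSet v).ncard) :
    ∃ 𝒞 : Finset G.Subgraph,
      (∀ C ∈ 𝒞, IsCycleSubgraph C) ∧
      (∀ C ∈ 𝒞, ∀ C' ∈ 𝒞, C ≠ C' → Disjoint C.edgeSet C'.edgeSet) ∧
      (⋃ C ∈ 𝒞, C.edgeSet) = G.edgeSet ∧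
      𝒞.card ≤ (Fintype.card V - 1) / 2 := by
  have hd := hypBelow (V := V) (G.support.ncard + 1) G hplanar heven (Nat.lt_succ_self _)
  have hle : G.support.ncard ≤ Fintype.card V := by
    rw [← Nat.card_eq_fintype_card]
    exact Set.ncard_le_card _
  exact (hd.mono (by omega)).exists_finset subset_rfl
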